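/- (Proposition 3: unconditional Lipschitz stability with final-time data.) Under the assumptions of the context, there exists a constant C > 0, depending on n, T, M, δ₀, D, R, p₁ and H but not on y and f (in particular not on any a priori bound on y), such that (∫_D |f(x)|² dx)^{1/2} + (∫₀^T ∫_D (|y(x,t)|² + |∂_t y(x,t)|²) dx dt)^{1/2} ≤ C ( d₁ + (∫_D (|y(x,T)|² + |∇_x y(x,T)|²) dx)^{1/2} ), where d₁ := (∫₀^T ∫_{B_{ρ₁}} |∂_t y(G₁(x'), t)|² ω₁(x') dx' dt)^{1/2}. -/

import Mathlib

noncomputable section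

open MeasureTheory Metric Set
open scoped RealInnerProductSpace

abbrev Esp (n : ℕ) : Type := EuclideanSpace ℝ (Fin n)

/-- The point `(x', xₙ) ∈ ℝ^{d+1} = ℝ^d × ℝ`. -/
noncomputable def graphMk (d : ℕ) (x' : Esp d) (xn : ℝ) : Esp (d+1) :=
  (EuclideanSpace.equiv (Fin (d+1)) ℝ).symm
    (Fin.snoc (⇑(EuclideanSpace.equiv (Fin d) ℝ) x') xn)

/-- `H` is `(M, δ₀)`-admissible on the compact set `K`. -/
def IsAdmissible {n : ℕ} (M δ₀ : ℝ) (K : Set (Esp n)) (H : Esp n → Esp n) : Prop :=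
  ∃ U : Set (Esp n), IsOpen U ∧ Convex ℝ U ∧ K ⊆ U ∧ ContDiffOn ℝ 1 H U ∧
    (∀ x ∈ U, ‖H x‖ ≤ M) ∧ (∀ x ∈ U, ‖fderiv ℝ H x‖ ≤ M) ∧ (∀ x ∈ K, δ₀ < ‖H x‖)

/-- `ψ_H(x) = ⟨x, H(x)⟩`. -/
noncomputable def psiW {n : ℕ} (H : Esp n → Esp n) (x : Esp n) : ℝ := ⟪x, H x⟫

/-- The Carleman weight `φ_H(x,t) = -βt + ψ_H(x)`. -/
noncomputable def phiW {n : ℕ} (β : ℝ) (H : Esp n → Esp n) (x : Esp n) (t : ℝ) : ℝ :=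
  -(β * t) + psiW H x

/-- Outward unit normal `ν₁` of the upper graph `xₙ = ℓ(x')`. -/
noncomputable def nuUp (d : ℕ) (ℓ : Esp d → ℝ) (x' : Esp d) : Esp (d+1) :=
  (Real.sqrt (1 + ‖gradient ℓ x'‖ ^ 2))⁻¹ • graphMk d (-(gradient ℓ x')) 1

/-- Outward unit normal `ν₂` of the lower graph `xₙ = m(x')`. -/
noncomputable def nuDown (d : ℕ) (m : Esp d → ℝ) (x' : Esp d) : Esp (d+1) :=
  (Real.sqrt (1 + ‖gradient m x'‖ ^ 2))⁻¹ • graphMk d (gradient m x') (-1)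

/-- Area element `ω(x') = √(1 + |∇m(x')|²)` of the graph of `m`. -/
noncomputable def omegaW (d : ℕ) (m : Esp d → ℝ) (x' : Esp d) : ℝ :=
  Real.sqrt (1 + ‖gradient m x'‖ ^ 2)

/-- The graph domain `D = {(x', xₙ) : |x'| < ρ₁, ℓ(x') − ℓ̃(x') < xₙ < ℓ(x')}`. -/
def graphDomain (d : ℕ) (ρ₁ : ℝ) (ℓ ℓt : Esp d → ℝ) : Set (Esp (d+1)) :=
  {x | ∃ x' : Esp d, ∃ xn : ℝ, ‖x'‖ < ρ₁ ∧ ℓ x' - ℓt x' < xn ∧ xn < ℓ x' ∧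
    x = graphMk d x' xn}

noncomputable section
open MeasureTheory Metric Set
open scoped RealInnerProductSpace
open Filter Topology

/-- A smooth cutoff on `ℝ`, equal to `0` on `(-∞, 1]` and to `1` on `[2, ∞)`. -/
def cutoff (t : ℝ) : ℝ := Real.smoothTransition (t - 1)

lemma contDiff_cutoff : ContDiff ℝ 1 cutoff :=
  (Real.smoothTransition.contDiff (n := 1)).comp (contDiff_id.sub contDiff_const)

lemma cutoff_nonneg (t : ℝ) : 0 ≤ cutoff t := Real.smoothTransition.nonneg _

lemma cutoff_le_one (t : ℝ) : cutoff t ≤ 1 := Real.smoothTransition.le_one _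

lemma cutoff_of_le {t : ℝ} (h : t ≤ 1) : cutoff t = 0 :=
  Real.smoothTransition.zero_of_nonpos (by linarith)

lemma cutoff_of_ge {t : ℝ} (h : 2 ≤ t) : cutoff t = 1 :=
  Real.smoothTransition.one_of_one_le (by linarith)

lemma hasDerivAt_cutoff (t : ℝ) : HasDerivAt cutoff (deriv cutoff t) t :=
  (contDiff_cutoff.differentiable one_ne_zero t).hasDerivAt

lemma continuous_deriv_cutoff : Continuous (deriv cutoff) :=
  contDiff_cutoff.continuous_deriv le_rfl

lemma deriv_cutoff_nonneg (t : ℝ) : 0 ≤ deriv cutoff t :=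
  Monotone.deriv_nonneg (fun _ _ h => Real.smoothTransition.monotone (by linarith))

lemma deriv_cutoff_of_lt {t : ℝ} (h : t < 1) : deriv cutoff t = 0 := by
  have : cutoff =ᶠ[𝓝 t] fun _ => 0 := by
    filter_upwards [Iio_mem_nhds h] with s hs using cutoff_of_le (le_of_lt hs)
  rw [this.deriv_eq]; simp

lemma deriv_cutoff_of_gt {t : ℝ} (h : 2 < t) : deriv cutoff t = 0 := by
  have : cutoff =ᶠ[𝓝 t] fun _ => 1 := by
    filter_upwards [Ioi_mem_nhds h] with s hs using cutoff_of_ge (le_of_lt hs)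
  rw [this.deriv_eq]; simp

lemma exists_bound_deriv_cutoff : ∃ C, ∀ t, |deriv cutoff t| ≤ C := by
  obtain ⟨C, hC⟩ := isCompact_Icc.exists_bound_of_continuousOn
    (s := Icc (1 : ℝ) 2) continuous_deriv_cutoff.continuousOn
  refine ⟨max C 0, fun t => ?_⟩
  rcases lt_or_ge t 1 with h | h
  · simp [deriv_cutoff_of_lt h]
  rcases lt_or_ge 2 t with h' | h'
  · simp [deriv_cutoff_of_gt h']
  · exact (hC t ⟨h, h'⟩).trans (le_max_left _ _)

lemma integral_layer (k a b : ℝ) :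
    ∫ s in a..b, k * deriv cutoff (k * (b - s)) = cutoff (k * (b - a)) := by
  have h : ∀ s ∈ uIcc a b,
      HasDerivAt (fun s => -cutoff (k * (b - s))) (k * deriv cutoff (k * (b - s))) s := by
    intro s _
    have h1 : HasDerivAt (fun s => k * (b - s)) (k * (-1)) s :=
      ((hasDerivAt_id s).const_sub b).const_mul k
    have := ((hasDerivAt_cutoff (k * (b - s))).comp s h1).neg
    exact this.congr_deriv (by ring)
  have hc : Continuous fun s => k * deriv cutoff (k * (b - s)) :=
    continuous_const.mul (continuous_deriv_cutoff.comp (by fun_prop))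
  rw [intervalIntegral.integral_eq_sub_of_hasDerivAt h (hc.intervalIntegrable _ _)]
  simp [cutoff_of_le]

lemma intervalIntegrable_layer {a b : ℝ} (hab : a ≤ b) {h : ℝ → ℝ}
    (hh : ContinuousOn h (Icc a b)) (k : ℝ) :
    IntervalIntegrable
      (fun s => k * deriv cutoff (k * (b - s)) * cutoff (k * (s - a)) * h s) volume a b := by
  apply ContinuousOn.intervalIntegrable
  rw [uIcc_of_le hab]
  have hc : Continuous fun s => k * deriv cutoff (k * (b - s)) :=
    continuous_const.mul (continuous_deriv_cutoff.comp (by fun_prop))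
  have hc' : Continuous fun s => cutoff (k * (s - a)) :=
    contDiff_cutoff.continuous.comp (by fun_prop)
  exact (hc.mul hc').continuousOn.mul hh

lemma abs_integral_layer_le {a b : ℝ} (hab : a ≤ b) {h : ℝ → ℝ} {C : ℝ}
    (hC : ∀ s ∈ Ioo a b, |h s| ≤ C) (hC0 : 0 ≤ C) {k : ℝ} (hk : 0 ≤ k) :
    |∫ s in a..b, k * deriv cutoff (k * (b - s)) * cutoff (k * (s - a)) * h s| ≤ C := by
  have hc : Continuous fun s => k * deriv cutoff (k * (b - s)) :=
    continuous_const.mul (continuous_deriv_cutoff.comp (by fun_prop))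
  have hbd : ∀ᵐ s, s ∈ Ioc a b →
      ‖k * deriv cutoff (k * (b - s)) * cutoff (k * (s - a)) * h s‖
        ≤ k * deriv cutoff (k * (b - s)) * C := by
    have hne : ∀ᵐ s : ℝ, s ≠ b := by simp [ae_iff, measure_singleton]
    filter_upwards [hne] with s hsb hs
    have hp := mul_nonneg hk (deriv_cutoff_nonneg (k * (b - s)))
    rw [norm_mul, norm_mul, Real.norm_of_nonneg hp, Real.norm_of_nonneg (cutoff_nonneg _),
      mul_assoc]
    refine mul_le_mul_of_nonneg_left ?_ hp
    calc cutoff (k * (s - a)) * ‖h s‖ ≤ 1 * C :=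
          mul_le_mul (cutoff_le_one _) (hC s ⟨hs.1, lt_of_le_of_ne hs.2 hsb⟩)
            (norm_nonneg _) zero_le_one
      _ = C := one_mul C
  have := intervalIntegral.norm_integral_le_of_norm_le hab hbd
    ((hc.mul continuous_const).intervalIntegrable _ _)
  rw [intervalIntegral.integral_mul_const, integral_layer] at this
  exact this.trans (mul_le_of_le_one_left hC0 (cutoff_le_one _))

lemma tendsto_integral_layer_upper {a b : ℝ} (hab : a < b) {h : ℝ → ℝ}
    (hh : ContinuousOn h (Icc a b)) :
    Tendsto (fun k : ℕ => ∫ s in a..b,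
      (k : ℝ) * deriv cutoff (k * (b - s)) * cutoff (k * (s - a)) * h s) atTop (𝓝 (h b)) := by
  rw [Metric.tendsto_atTop']
  intro ε hε
  obtain ⟨δ, hδ, hδh⟩ := Metric.continuousOn_iff.1 hh b ⟨hab.le, le_rfl⟩ (ε / 2) (half_pos hε)
  obtain ⟨N, hN⟩ := exists_nat_gt (max (4 / (b - a)) (2 / δ))
  refine ⟨N, fun k hk => ?_⟩
  have hba : 0 < b - a := sub_pos.2 hab
  have hkN : (N : ℝ) < k := by exact_mod_cast hk
  have h4 : 4 < k * (b - a) := by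
    have := ((le_max_left _ _).trans_lt hN).trans hkN
    rwa [div_lt_iff₀ hba] at this
  have h2 : 2 < k * δ := by
    have := ((le_max_right _ _).trans_lt hN).trans hkN
    rwa [div_lt_iff₀ hδ] at this
  have hk0 : (0 : ℝ) < k := lt_of_le_of_lt (Nat.cast_nonneg N) hkN
  have hc : Continuous fun s => (k : ℝ) * deriv cutoff (k * (b - s)) :=
    continuous_const.mul (continuous_deriv_cutoff.comp (by fun_prop))
  have e1 : h b = ∫ s in a..b, (k : ℝ) * deriv cutoff (k * (b - s)) * h b := by
    rw [intervalIntegral.integral_mul_const, integral_layer, cutoff_of_ge (by linarith), one_mul]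
  rw [Real.dist_eq]
  conv_lhs => rw [e1]
  have hi : IntervalIntegrable (fun s => (k : ℝ) * deriv cutoff (k * (b - s)) * h b) volume a b :=
    (hc.mul continuous_const).intervalIntegrable _ _
  rw [← intervalIntegral.integral_sub (intervalIntegrable_layer hab.le hh k) hi]
  have hbd : ∀ᵐ s, s ∈ Ioc a b →
      ‖(k : ℝ) * deriv cutoff (k * (b - s)) * cutoff (k * (s - a)) * h s
        - k * deriv cutoff (k * (b - s)) * h b‖ ≤ k * deriv cutoff (k * (b - s)) * (ε / 2) := by
    refine Eventually.of_forall fun s hs => ?_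
    have hp := mul_nonneg hk0.le (deriv_cutoff_nonneg (k * (b - s)))
    rcases lt_or_ge 2 (k * (b - s)) with h' | h'
    · simp [deriv_cutoff_of_gt h']
    have h1 : cutoff (k * (s - a)) = 1 := cutoff_of_ge (by nlinarith)
    rw [h1, mul_one, ← mul_sub, norm_mul, Real.norm_of_nonneg hp]
    refine mul_le_mul_of_nonneg_left ?_ hp
    refine (hδh s ⟨hs.1.le, hs.2⟩ ?_).le
    rw [Real.dist_eq, abs_sub_comm, abs_of_nonneg (by linarith [hs.2])]
    by_contra! hcon
    nlinarith
  have := intervalIntegral.norm_integral_le_of_norm_le hab.le hbd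
    ((hc.mul continuous_const).intervalIntegrable _ _)
  rw [intervalIntegral.integral_mul_const, integral_layer] at this
  refine (this.trans (mul_le_of_le_one_left (half_pos hε).le (cutoff_le_one _))).trans_lt ?_
  linarith

lemma integral_layer_reflect (k a b : ℝ) (h : ℝ → ℝ) :
    ∫ s in a..b, k * deriv cutoff (k * (s - a)) * cutoff (k * (b - s)) * h s
      = ∫ s in a..b, k * deriv cutoff (k * (b - s)) * cutoff (k * (s - a)) * h (a + b - s) := by
  have := intervalIntegral.integral_comp_sub_left (a := a) (b := b)
    (fun s => k * deriv cutoff (k * (s - a)) * cutoff (k * (b - s)) * h s) (a + b)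
  rw [show a + b - b = a by ring, show a + b - a = b by ring] at this
  rw [← this]
  congr 1 with s
  rw [show a + b - s - a = b - s by ring, show b - (a + b - s) = s - a by ring]

/-- The divergence of a vector field on Euclidean space. -/
def divergence {n : ℕ} (X : Esp n → Esp n) (x : Esp n) : ℝ :=
  ∑ i, fderiv ℝ X x (EuclideanSpace.single i 1) i

lemma abs_sum_apply_single_le {n : ℕ} (A : Esp n →L[ℝ] Esp n) :
    |∑ i, A (EuclideanSpace.single i 1) i| ≤ n * ‖A‖ := by
  refine (Finset.abs_sum_le_sum_abs _ _).trans ?_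
  calc ∑ i, |A (EuclideanSpace.single i 1) i| ≤ ∑ _i : Fin n, ‖A‖ := by
        refine Finset.sum_le_sum fun i _ => ?_
        refine (PiLp.norm_apply_le (A (EuclideanSpace.single i 1)) i).trans ?_
        refine (A.le_opNorm _).trans ?_
        simp
    _ = n * ‖A‖ := by simp

lemma continuous_divergence {n : ℕ} {X : Esp n → Esp n} (hX : ContDiff ℝ 1 X) :
    Continuous (divergence X) := by
  have h := hX.continuous_fderiv one_ne_zero
  unfold divergence
  fun_prop

lemma hasCompactSupport_divergence {n : ℕ} {X : Esp n → Esp n} (hc : HasCompactSupport X) :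
    HasCompactSupport (divergence X) := by
  refine (hc.fderiv (𝕜 := ℝ)).mono fun x hx => ?_
  contrapose! hx
  simp only [Function.mem_support, not_not] at hx ⊢
  simp [divergence, hx]

/-- The divergence of a compactly supported `C¹` vector field has vanishing integral. -/
lemma integral_divergence_eq_zero {n : ℕ} {X : Esp n → Esp n} (hX : ContDiff ℝ 1 X)
    (hc : HasCompactSupport X) : ∫ x, divergence X x = 0 := by
  have hcf := hX.continuous_fderiv one_ne_zero
  have hint : ∀ i : Fin n, Integrable (fun x => fderiv ℝ X x (EuclideanSpace.single i 1) i) := by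
    intro i
    refine Continuous.integrable_of_hasCompactSupport (by fun_prop) ?_
    refine (hc.fderiv (𝕜 := ℝ)).mono fun x hx => ?_
    contrapose! hx
    simp only [Function.mem_support, not_not] at hx ⊢
    simp [hx]
  unfold divergence
  rw [integral_finsetSum _ fun i _ => hint i]
  refine Finset.sum_eq_zero fun i _ => ?_
  have hXi : Integrable (fun x => X x i) := by
    refine Continuous.integrable_of_hasCompactSupport (by have := hX.continuous; fun_prop) ?_
    refine hc.mono fun x hx => ?_
    contrapose! hx
    simp only [Function.mem_support, not_not] at hx ⊢
    simp [hx]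
  have hder : ∀ x, HasFDerivAt (fun x => X x i)
      ((EuclideanSpace.proj i : Esp n →L[ℝ] ℝ).comp (fderiv ℝ X x)) x := fun x =>
    (EuclideanSpace.proj i : Esp n →L[ℝ] ℝ).hasFDerivAt.comp x
      (hX.differentiable one_ne_zero x).hasFDerivAt
  have hfd : ∀ x, fderiv ℝ (fun x => X x i) x (EuclideanSpace.single i 1)
      = fderiv ℝ X x (EuclideanSpace.single i 1) i := fun x => by
    rw [(hder x).fderiv]; rfl
  have := integral_mul_fderiv_eq_neg_fderiv_mul_of_integrable (μ := (volume : Measure (Esp n)))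
    (f := fun x => X x i) (g := fun _ => (1 : ℝ)) (v := EuclideanSpace.single i 1)
    (by simpa [hfd] using hint i) (by simp) (by simpa using hXi)
    (fun x _ => (hder x).differentiableAt) (fun _ _ => differentiableAt_const _)
  simp only [hfd] at this
  simpa using this.symm

end

noncomputable section
open MeasureTheory Metric Set
open scoped RealInnerProductSpace
open Filter Topology

variable {d : ℕ}

/-- The projection `(x', xₙ) ↦ x'`. -/
def headProj (d : ℕ) : Esp (d + 1) →L[ℝ] Esp d :=
  ((EuclideanSpace.equiv (Fin d) ℝ).symm : (Fin d → ℝ) →L[ℝ] Esp d).comp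
    (ContinuousLinearMap.pi fun i => (EuclideanSpace.proj i.castSucc : Esp (d + 1) →L[ℝ] ℝ))

/-- The projection `(x', xₙ) ↦ xₙ`. -/
def lastProj (d : ℕ) : Esp (d + 1) →L[ℝ] ℝ := EuclideanSpace.proj (Fin.last d)

@[simp] lemma headProj_apply (x : Esp (d + 1)) (i : Fin d) : headProj d x i = x i.castSucc := rfl

lemma graphMk_castSucc (x' : Esp d) (s : ℝ) (i : Fin d) : graphMk d x' s i.castSucc = x' i := by
  simp [graphMk, EuclideanSpace.equiv]

lemma graphMk_last (x' : Esp d) (s : ℝ) : graphMk d x' s (Fin.last d) = s := by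
  simp [graphMk, EuclideanSpace.equiv]

@[simp] lemma headProj_graphMk (x' : Esp d) (s : ℝ) : headProj d (graphMk d x' s) = x' := by
  ext i; simp [graphMk_castSucc]

@[simp] lemma lastProj_graphMk (x' : Esp d) (s : ℝ) : lastProj d (graphMk d x' s) = s :=
  graphMk_last x' s

@[simp] lemma graphMk_proj (x : Esp (d + 1)) : graphMk d (headProj d x) (lastProj d x) = x := by
  ext i
  refine Fin.lastCases ?_ (fun j => ?_) i
  · rw [graphMk_last]; rfl
  · rw [graphMk_castSucc]; rfl

lemma inner_graphMk (x : Esp (d + 1)) (b : Esp d) (r : ℝ) :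
    ⟪x, graphMk d b r⟫ = ⟪headProj d x, b⟫ + lastProj d x * r := by
  simp only [PiLp.inner_apply, Fin.sum_univ_castSucc, graphMk_castSucc, graphMk_last]
  simp [lastProj, mul_comm]

lemma continuous_graphMk : Continuous fun p : Esp d × ℝ => graphMk d p.1 p.2 := by
  rw [← (EuclideanSpace.equiv (Fin (d + 1)) ℝ).comp_continuous_iff]
  refine continuous_pi fun i => ?_
  refine Fin.lastCases ?_ (fun j => ?_) i
  · simpa [graphMk_last] using continuous_snd
  · simp only [Function.comp_def, PiLp.coe_continuousLinearEquiv, graphMk_castSucc]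
    fun_prop

lemma measurePreserving_graphMk :
    MeasurePreserving (fun p : Esp d × ℝ => graphMk d p.1 p.2) (volume.prod volume) volume := by
  have h1 := (volume_preserving_piFinSuccAbove (fun _ : Fin (d + 1) => ℝ) (Fin.last d)).symm
  have h2 := (PiLp.volume_preserving_toLp (Fin (d + 1))).comp h1
  have h3 : MeasurePreserving (fun p : Esp d × ℝ => (p.2, (WithLp.ofLp p.1 : Fin d → ℝ)))
      (volume.prod volume) (volume.prod volume) :=
    ((MeasurePreserving.id volume).prod (PiLp.volume_preserving_ofLp (Fin d))).comp
      Measure.measurePreserving_swap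
  have h4 := h2.comp h3
  suffices heq : (fun p : Esp d × ℝ => graphMk d p.1 p.2) =
      (WithLp.toLp 2 ∘ (MeasurableEquiv.piFinSuccAbove (fun _ => ℝ) (Fin.last d)).symm) ∘
        fun p : Esp d × ℝ => (p.2, (WithLp.ofLp p.1 : Fin d → ℝ)) by
    rw [heq]; exact h4
  funext p
  ext i
  refine Fin.lastCases ?_ (fun j => ?_) i
  · simp [graphMk_last, MeasurableEquiv.piFinSuccAbove, Fin.insertNthEquiv]
  · simp [graphMk_castSucc, MeasurableEquiv.piFinSuccAbove, Fin.insertNthEquiv]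

lemma measurableEmbedding_graphMk :
    MeasurableEmbedding fun p : Esp d × ℝ => graphMk d p.1 p.2 := by
  refine MeasurableEquiv.measurableEmbedding (⟨⟨fun p => graphMk d p.1 p.2,
    fun x => (headProj d x, lastProj d x), fun p => by simp, fun x => by simp⟩, ?_, ?_⟩ :
    (Esp d × ℝ) ≃ᵐ Esp (d + 1))
  · exact continuous_graphMk.measurable
  · exact ((headProj d).continuous.prodMk (lastProj d).continuous).measurable

section Domain

variable {ρ₁ : ℝ} {ℓ ℓt : Esp d → ℝ}

lemma mem_graphDomain_iff {x : Esp (d + 1)} :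
    x ∈ graphDomain d ρ₁ ℓ ℓt ↔ ‖headProj d x‖ < ρ₁ ∧
      ℓ (headProj d x) - ℓt (headProj d x) < lastProj d x ∧ lastProj d x < ℓ (headProj d x) := by
  constructor
  · rintro ⟨x', s, h1, h2, h3, rfl⟩
    simpa using ⟨h1, h2, h3⟩
  · rintro ⟨h1, h2, h3⟩
    exact ⟨_, _, h1, h2, h3, (graphMk_proj x).symm⟩

lemma isOpen_graphDomain (hℓ : ContinuousOn ℓ (closedBall 0 ρ₁))
    (hℓt : ContinuousOn ℓt (closedBall 0 ρ₁)) : IsOpen (graphDomain d ρ₁ ℓ ℓt) := by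
  have hA : IsOpen {x : Esp (d + 1) | headProj d x ∈ ball (0 : Esp d) ρ₁} :=
    isOpen_ball.preimage (headProj d).continuous
  have hmaps : MapsTo (headProj d) {x : Esp (d + 1) | headProj d x ∈ ball (0 : Esp d) ρ₁}
      (closedBall 0 ρ₁) := fun x hx => ball_subset_closedBall hx
  have h1 := hℓ.comp (headProj d).continuous.continuousOn hmaps
  have h2 := hℓt.comp (headProj d).continuous.continuousOn hmaps
  have hc : ContinuousOn (fun x => (lastProj d x - (ℓ (headProj d x) - ℓt (headProj d x)),
      ℓ (headProj d x) - lastProj d x)) {x : Esp (d + 1) | headProj d x ∈ ball (0 : Esp d) ρ₁} :=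
    ((lastProj d).continuous.continuousOn.sub (h1.sub h2)).prodMk
      (h1.sub (lastProj d).continuous.continuousOn)
  convert hc.isOpen_inter_preimage hA ((isOpen_Ioi (a := (0 : ℝ))).prod (isOpen_Ioi (a := (0 : ℝ))))
    using 1
  ext x
  simp [mem_graphDomain_iff]

/-- The closed region between the graphs, shrunk by `c` at both graphs. -/
def shrunkRegion (d : ℕ) (ρ₁ : ℝ) (ℓ ℓt : Esp d → ℝ) (c : ℝ) : Set (Esp (d + 1)) :=
  {x | ‖headProj d x‖ ≤ ρ₁ ∧ ℓ (headProj d x) - ℓt (headProj d x) + c ≤ lastProj d x ∧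
    lastProj d x ≤ ℓ (headProj d x) - c}

lemma isCompact_shrunkRegion (hℓ : ContinuousOn ℓ (closedBall 0 ρ₁))
    (hℓt : ContinuousOn ℓt (closedBall 0 ρ₁)) {c : ℝ} (hc : 0 ≤ c) :
    IsCompact (shrunkRegion d ρ₁ ℓ ℓt c) := by
  obtain ⟨C₁, hC₁⟩ := (isCompact_closedBall _ _).exists_bound_of_continuousOn hℓ
  obtain ⟨C₂, hC₂⟩ := (isCompact_closedBall _ _).exists_bound_of_continuousOn (hℓ.sub hℓt)
  have hbig : IsCompact ((fun p : Esp d × ℝ => graphMk d p.1 p.2) ''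
      (closedBall 0 ρ₁ ×ˢ Icc (-C₂) C₁)) :=
    ((isCompact_closedBall _ _).prod isCompact_Icc).image continuous_graphMk
  refine hbig.of_isClosed_subset ?_ ?_
  · have hA : IsClosed {x : Esp (d + 1) | headProj d x ∈ closedBall (0 : Esp d) ρ₁} :=
      isClosed_closedBall.preimage (headProj d).continuous
    have hmaps : MapsTo (headProj d) {x : Esp (d + 1) | headProj d x ∈ closedBall (0 : Esp d) ρ₁}
      (closedBall 0 ρ₁) := fun x hx => hx
    have h1 := hℓ.comp (headProj d).continuous.continuousOn hmaps
    have h2 := hℓt.comp (headProj d).continuous.continuousOn hmaps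
    have hcont : ContinuousOn (fun x => (lastProj d x - (ℓ (headProj d x) - ℓt (headProj d x)),
        ℓ (headProj d x) - lastProj d x))
        {x : Esp (d + 1) | headProj d x ∈ closedBall (0 : Esp d) ρ₁} :=
      ((lastProj d).continuous.continuousOn.sub (h1.sub h2)).prodMk
        (h1.sub (lastProj d).continuous.continuousOn)
    convert hcont.preimage_isClosed_of_isClosed hA
      ((isClosed_Ici (a := c)).prod (isClosed_Ici (a := c))) using 1
    ext x
    simp only [shrunkRegion, mem_ofPred_eq, mem_inter_iff, mem_closedBall, dist_zero_right,
      mem_preimage, mem_prod, mem_Ici]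
    constructor
    · rintro ⟨h1, h2, h3⟩; exact ⟨h1, by linarith, by linarith⟩
    · rintro ⟨h1, h2, h3⟩; exact ⟨h1, by linarith, by linarith⟩
  · rintro x ⟨h1, h2, h3⟩
    have hx : headProj d x ∈ closedBall (0 : Esp d) ρ₁ := by simpa using h1
    refine ⟨(headProj d x, lastProj d x), ⟨hx, ?_, ?_⟩, by simp⟩
    · have := neg_le_of_abs_le (hC₂ _ hx)
      simp only [Pi.sub_apply] at this
      linarith
    · have := le_of_abs_le (hC₁ _ hx)
      linarith

lemma shrunkRegion_subset_graphDomain (hℓt0 : ∀ x' : Esp d, ‖x'‖ = ρ₁ → ℓt x' = 0) {c : ℝ}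
    (hc : 0 < c) : shrunkRegion d ρ₁ ℓ ℓt c ⊆ graphDomain d ρ₁ ℓ ℓt := by
  rintro x ⟨h1, h2, h3⟩
  refine mem_graphDomain_iff.2 ⟨lt_of_le_of_ne h1 fun h => ?_, by linarith, by linarith⟩
  have := hℓt0 _ h
  linarith

lemma closure_graphDomain_subset (hℓ : ContinuousOn ℓ (closedBall 0 ρ₁))
    (hℓt : ContinuousOn ℓt (closedBall 0 ρ₁)) :
    closure (graphDomain d ρ₁ ℓ ℓt) ⊆ shrunkRegion d ρ₁ ℓ ℓt 0 := by
  refine closure_minimal (fun x hx => ?_) (isCompact_shrunkRegion hℓ hℓt le_rfl).isClosed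
  obtain ⟨h1, h2, h3⟩ := mem_graphDomain_iff.1 hx
  exact ⟨h1.le, by linarith, by linarith⟩

lemma isCompact_closure_graphDomain (hℓ : ContinuousOn ℓ (closedBall 0 ρ₁))
    (hℓt : ContinuousOn ℓt (closedBall 0 ρ₁)) :
    IsCompact (closure (graphDomain d ρ₁ ℓ ℓt)) :=
  (isCompact_shrunkRegion hℓ hℓt le_rfl).of_isClosed_subset isClosed_closure
    (closure_graphDomain_subset hℓ hℓt)

lemma volume_graphDomain_lt_top (hℓ : ContinuousOn ℓ (closedBall 0 ρ₁))
    (hℓt : ContinuousOn ℓt (closedBall 0 ρ₁)) :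
    volume (graphDomain d ρ₁ ℓ ℓt) < ⊤ :=
  (measure_mono subset_closure).trans_lt (isCompact_closure_graphDomain hℓ hℓt).measure_lt_top

lemma graphMk_mem_graphDomain {x' : Esp d} (hx' : ‖x'‖ < ρ₁) {s : ℝ}
    (hs : s ∈ Ioo (ℓ x' - ℓt x') (ℓ x')) : graphMk d x' s ∈ graphDomain d ρ₁ ℓ ℓt :=
  ⟨x', s, hx', hs.1, hs.2, rfl⟩

lemma graphMk_mem_closure {x' : Esp d} (hx' : ‖x'‖ < ρ₁) (hpos : 0 < ℓt x') {s : ℝ}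
    (hs : s ∈ Icc (ℓ x' - ℓt x') (ℓ x')) : graphMk d x' s ∈ closure (graphDomain d ρ₁ ℓ ℓt) := by
  have hmaps : MapsTo (graphMk d x') (Ioo (ℓ x' - ℓt x') (ℓ x')) (graphDomain d ρ₁ ℓ ℓt) :=
    fun s hs => graphMk_mem_graphDomain hx' hs
  refine hmaps.closure (continuous_graphMk.comp (Continuous.prodMk_right x')) ?_
  rwa [closure_Ioo (by linarith)]

/-- A bounded continuous function on the graph domain is integrable there. -/
lemma integrableOn_of_bounded {E : Type*} [MeasurableSpace E] [TopologicalSpace E]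
    [OpensMeasurableSpace E] {μ : Measure E} {s : Set E} (hs : MeasurableSet s) (hμ : μ s < ⊤)
    {g : E → ℝ} (hg : ContinuousOn g s) {C : ℝ} (hC : ∀ x ∈ s, |g x| ≤ C) :
    IntegrableOn g s μ :=
  IntegrableOn.of_bound hμ (hg.aestronglyMeasurable hs) C
    ((ae_restrict_iff' hs).2 (Eventually.of_forall hC))

lemma integral_graphDomain (hℓ : ContinuousOn ℓ (closedBall 0 ρ₁))
    (hℓt : ContinuousOn ℓt (closedBall 0 ρ₁))
    (hpos : ∀ x' : Esp d, ‖x'‖ < ρ₁ → 0 < ℓt x') {h : Esp (d + 1) → ℝ}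
    (hh : IntegrableOn h (graphDomain d ρ₁ ℓ ℓt)) :
    IntegrableOn (fun x' => ∫ s in (ℓ x' - ℓt x')..(ℓ x'), h (graphMk d x' s)) (ball 0 ρ₁) ∧
    ∫ x in graphDomain d ρ₁ ℓ ℓt, h x
      = ∫ x' in ball (0 : Esp d) ρ₁, ∫ s in (ℓ x' - ℓt x')..(ℓ x'), h (graphMk d x' s) := by
  have hD := (isOpen_graphDomain hℓ hℓt).measurableSet
  set I : Esp (d + 1) → ℝ := (graphDomain d ρ₁ ℓ ℓt).indicator h with hI
  have hint : Integrable I := (integrable_indicator_iff hD).2 hh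
  have hint' : Integrable (fun p : Esp d × ℝ => I (graphMk d p.1 p.2)) (volume.prod volume) :=
    (measurePreserving_graphMk.integrable_comp_emb measurableEmbedding_graphMk).2 hint
  have key : (fun x' => ∫ s, I (graphMk d x' s)) = (ball (0 : Esp d) ρ₁).indicator
      (fun x' => ∫ s in (ℓ x' - ℓt x')..(ℓ x'), h (graphMk d x' s)) := by
    funext x'
    by_cases hx' : x' ∈ ball (0 : Esp d) ρ₁
    · rw [indicator_of_mem hx']
      have hx'' : ‖x'‖ < ρ₁ := by simpa using hx'
      rw [intervalIntegral.integral_of_le (by linarith [hpos x' hx'']),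
        integral_Ioc_eq_integral_Ioo, ← integral_indicator measurableSet_Ioo]
      congr 1 with s
      by_cases hs : s ∈ Ioo (ℓ x' - ℓt x') (ℓ x')
      · rw [indicator_of_mem hs, hI, indicator_of_mem (graphMk_mem_graphDomain hx'' hs)]
      · rw [indicator_of_notMem hs, hI, indicator_of_notMem]
        intro hmem
        obtain ⟨_, h2⟩ := mem_graphDomain_iff.1 hmem
        simp only [headProj_graphMk, lastProj_graphMk] at h2
        exact hs h2
    · rw [indicator_of_notMem hx']
      have : ∀ s, I (graphMk d x' s) = 0 := fun s => by
        rw [hI, indicator_of_notMem]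
        intro hmem
        have := (mem_graphDomain_iff.1 hmem).1
        exact hx' (by simpa using this)
      simp [this]
  constructor
  · rw [← integrable_indicator_iff measurableSet_ball, ← key]
    exact hint'.integral_prod_left
  · rw [← integral_indicator hD, ← integral_indicator measurableSet_ball, ← key, ← hI,
      ← measurePreserving_graphMk.integral_comp measurableEmbedding_graphMk I,
      integral_prod _ hint']

end Domain
end

noncomputable section
open MeasureTheory Metric Set
open scoped RealInnerProductSpace
open Filter Topology

variable {d : ℕ}

section Gradient

variable {E : Type*} [NormedAddCommGroup E] [InnerProductSpace ℝ E] [CompleteSpace E]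

lemma inner_gradient_eq_fderiv (m : E → ℝ) (x v : E) : ⟪v, gradient m x⟫ = fderiv ℝ m x v := by
  rw [real_inner_comm, gradient, InnerProductSpace.toDual_symm_apply]

lemma norm_gradient_eq (m : E → ℝ) (x : E) : ‖gradient m x‖ = ‖fderiv ℝ m x‖ := by
  rw [gradient, LinearIsometryEquiv.norm_map]

lemma continuousOn_gradient {m : E → ℝ} {s : Set E} (hs : IsOpen s) (hm : ContDiffOn ℝ 1 m s) :
    ContinuousOn (gradient m) s :=
  (InnerProductSpace.toDual ℝ E).symm.continuous.comp_continuousOn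
    (hm.continuousOn_fderiv_of_isOpen hs le_rfl)

lemma exists_bound_gradient [FiniteDimensional ℝ E] {m : E → ℝ} {r : ℝ} (hr : 0 < r)
    (hm : ContDiffOn ℝ 1 m (closedBall 0 r)) : ∃ C, ∀ x ∈ ball (0 : E) r, ‖gradient m x‖ ≤ C := by
  have hu : UniqueDiffOn ℝ (closedBall (0 : E) r) :=
    uniqueDiffOn_convex (convex_closedBall 0 r) ⟨0, by
      rw [interior_closedBall _ hr.ne']; simpa using hr⟩
  obtain ⟨C, hC⟩ := (isCompact_closedBall _ _).exists_bound_of_continuousOn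
    (hm.continuousOn_fderivWithin hu le_rfl)
  refine ⟨C, fun x hx => ?_⟩
  rw [norm_gradient_eq, ← fderivWithin_of_mem_nhds (mem_of_superset (isOpen_ball.mem_nhds hx)
    ball_subset_closedBall)]
  exact hC x (ball_subset_closedBall hx)

end Gradient

section Domain

variable {ρ₁ : ℝ} {ℓ ℓt : Esp d → ℝ}

lemma mapsTo_headProj : MapsTo (headProj d) (graphDomain d ρ₁ ℓ ℓt) (ball 0 ρ₁) := fun x hx => by
  simpa using (mem_graphDomain_iff.1 hx).1

lemma continuousOn_comp_headProj {F : Type*} [TopologicalSpace F] {m : Esp d → F}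
    (hm : ContinuousOn m (ball 0 ρ₁)) :
    ContinuousOn (fun x => m (headProj d x)) (graphDomain d ρ₁ ℓ ℓt) :=
  hm.comp (headProj d).continuous.continuousOn mapsTo_headProj

lemma continuousOn_comp_graph {F : Type*} [TopologicalSpace F] {g : Esp (d + 1) → F}
    (hg : ContinuousOn g (closure (graphDomain d ρ₁ ℓ ℓt)))
    (hpos : ∀ x' : Esp d, ‖x'‖ < ρ₁ → 0 < ℓt x') {m : Esp d → ℝ} (hm : ContinuousOn m (ball 0 ρ₁))
    (hmem : ∀ x' : Esp d, ‖x'‖ < ρ₁ → m x' ∈ Icc (ℓ x' - ℓt x') (ℓ x')) :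
    ContinuousOn (fun x' => g (graphMk d x' (m x'))) (ball 0 ρ₁) := by
  refine hg.comp (continuous_graphMk.comp_continuousOn (continuousOn_id.prodMk hm)) ?_
  intro x' hx'
  have hx'' : ‖x'‖ < ρ₁ := by simpa using hx'
  exact graphMk_mem_closure hx'' (hpos _ hx'') (hmem _ hx'')

lemma tendsto_integral_graphDomain_layer (hℓ : ContinuousOn ℓ (closedBall 0 ρ₁))
    (hℓt : ContinuousOn ℓt (closedBall 0 ρ₁)) (hpos : ∀ x' : Esp d, ‖x'‖ < ρ₁ → 0 < ℓt x')
    {g : ℕ → Esp (d + 1) → ℝ} (hg : ∀ k, IntegrableOn (g k) (graphDomain d ρ₁ ℓ ℓt))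
    {C : ℝ} {b : Esp d → ℝ}
    (hC : ∀ k, ∀ x' : Esp d, ‖x'‖ < ρ₁ →
      |∫ s in (ℓ x' - ℓt x')..(ℓ x'), g k (graphMk d x' s)| ≤ C)
    (hlim : ∀ x' : Esp d, ‖x'‖ < ρ₁ → Tendsto
      (fun k => ∫ s in (ℓ x' - ℓt x')..(ℓ x'), g k (graphMk d x' s)) atTop (𝓝 (b x'))) :
    Tendsto (fun k => ∫ x in graphDomain d ρ₁ ℓ ℓt, g k x) atTop
      (𝓝 (∫ x' in ball (0 : Esp d) ρ₁, b x')) := by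
  simp_rw [fun k => (integral_graphDomain hℓ hℓt hpos (hg k)).2]
  refine tendsto_integral_of_dominated_convergence (fun _ => C)
    (fun k => (integral_graphDomain hℓ hℓt hpos (hg k)).1.aestronglyMeasurable)
    (integrableOn_const measure_ball_lt_top.ne) (fun k => ?_) ?_
  · exact (ae_restrict_iff' measurableSet_ball).2
      (Eventually.of_forall fun x' hx' => hC k x' (by simpa using hx'))
  · exact (ae_restrict_iff' measurableSet_ball).2
      (Eventually.of_forall fun x' hx' => hlim x' (by simpa using hx'))

/-- The interior cutoff function of the graph domain at scale `1 / k`. -/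
def domainCutoff (ℓ ℓt : Esp d → ℝ) (k : ℝ) (x : Esp (d + 1)) : ℝ :=
  cutoff (k * (ℓ (headProj d x) - lastProj d x)) *
    cutoff (k * (lastProj d x - (ℓ (headProj d x) - ℓt (headProj d x))))

/-- Boundary layer concentrated at the upper graph. -/
def upperLayer (ℓ ℓt : Esp d → ℝ) (k : ℝ) (x : Esp (d + 1)) : ℝ :=
  k * deriv cutoff (k * (ℓ (headProj d x) - lastProj d x)) *
    cutoff (k * (lastProj d x - (ℓ (headProj d x) - ℓt (headProj d x))))

/-- Boundary layer concentrated at the lower graph. -/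
def lowerLayer (ℓ ℓt : Esp d → ℝ) (k : ℝ) (x : Esp (d + 1)) : ℝ :=
  k * deriv cutoff (k * (lastProj d x - (ℓ (headProj d x) - ℓt (headProj d x)))) *
    cutoff (k * (ℓ (headProj d x) - lastProj d x))

lemma integrableOn_layer_mul (hℓ : ContinuousOn ℓ (closedBall 0 ρ₁))
    (hℓt : ContinuousOn ℓt (closedBall 0 ρ₁)) {a b g : Esp (d + 1) → ℝ}
    (ha : ContinuousOn a (graphDomain d ρ₁ ℓ ℓt)) (hb : ContinuousOn b (graphDomain d ρ₁ ℓ ℓt))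
    (hg : ContinuousOn g (graphDomain d ρ₁ ℓ ℓt))
    {C : ℝ} (hC : ∀ x ∈ graphDomain d ρ₁ ℓ ℓt, |g x| ≤ C) (k : ℝ) :
    IntegrableOn (fun x => k * deriv cutoff (a x) * cutoff (b x) * g x)
      (graphDomain d ρ₁ ℓ ℓt) := by
  obtain ⟨A, hA⟩ := exists_bound_deriv_cutoff
  have hA0 : 0 ≤ A := (abs_nonneg _).trans (hA 0)
  refine integrableOn_of_bounded (C := |k| * A * C) (isOpen_graphDomain hℓ hℓt).measurableSet
    (volume_graphDomain_lt_top hℓ hℓt) ?_ fun x hx => ?_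
  · exact ((continuousOn_const.mul (continuous_deriv_cutoff.comp_continuousOn ha)).mul
      (contDiff_cutoff.continuous.comp_continuousOn hb)).mul hg
  · rw [abs_mul, abs_mul, abs_mul, abs_of_nonneg (cutoff_nonneg (b x))]
    have h1 : |k| * |deriv cutoff (a x)| * cutoff (b x) ≤ |k| * A :=
      calc |k| * |deriv cutoff (a x)| * cutoff (b x) ≤ |k| * |deriv cutoff (a x)| * 1 := by
            gcongr; exact cutoff_le_one _
        _ ≤ |k| * A := by rw [mul_one]; gcongr; exact hA _
    exact mul_le_mul h1 (hC x hx) (abs_nonneg _) (by positivity)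

lemma continuousOn_upperGap (hℓ : ContinuousOn ℓ (closedBall 0 ρ₁)) (k : ℝ) : ContinuousOn
    (fun x => k * (ℓ (headProj d x) - lastProj d x)) (graphDomain d ρ₁ ℓ ℓt) :=
  continuousOn_const.mul ((continuousOn_comp_headProj (hℓ.mono ball_subset_closedBall)).sub
    (lastProj d).continuous.continuousOn)

lemma continuousOn_lowerGap (hℓ : ContinuousOn ℓ (closedBall 0 ρ₁))
    (hℓt : ContinuousOn ℓt (closedBall 0 ρ₁)) (k : ℝ) : ContinuousOn
    (fun x => k * (lastProj d x - (ℓ (headProj d x) - ℓt (headProj d x))))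
    (graphDomain d ρ₁ ℓ ℓt) :=
  continuousOn_const.mul ((lastProj d).continuous.continuousOn.sub
    ((continuousOn_comp_headProj (hℓ.mono ball_subset_closedBall)).sub
    (continuousOn_comp_headProj (hℓt.mono ball_subset_closedBall))))

lemma tendsto_upperLayer (hℓ : ContinuousOn ℓ (closedBall 0 ρ₁))
    (hℓt : ContinuousOn ℓt (closedBall 0 ρ₁)) (hpos : ∀ x' : Esp d, ‖x'‖ < ρ₁ → 0 < ℓt x')
    {g : Esp (d + 1) → ℝ}
    (hg : ContinuousOn g (graphDomain d ρ₁ ℓ ℓt))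
    {C : ℝ} (hC0 : 0 ≤ C) (hC : ∀ x ∈ graphDomain d ρ₁ ℓ ℓt, |g x| ≤ C)
    (hgc : ∀ x' : Esp d, ‖x'‖ < ρ₁ →
      ContinuousOn (fun s => g (graphMk d x' s)) (Icc (ℓ x' - ℓt x') (ℓ x'))) :
    Tendsto (fun k : ℕ => ∫ x in graphDomain d ρ₁ ℓ ℓt, upperLayer ℓ ℓt k x * g x) atTop
      (𝓝 (∫ x' in ball (0 : Esp d) ρ₁, g (graphMk d x' (ℓ x')))) := by
  refine tendsto_integral_graphDomain_layer hℓ hℓt hpos (C := C) (fun k => ?_) (fun k x' hx' => ?_)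
    fun x' hx' => ?_
  · exact integrableOn_layer_mul hℓ hℓt (continuousOn_upperGap hℓ k)
      (continuousOn_lowerGap hℓ hℓt k) hg hC k
  · simp only [upperLayer, headProj_graphMk, lastProj_graphMk]
    exact abs_integral_layer_le (by linarith [hpos x' hx'])
      (fun s hs => hC _ (graphMk_mem_graphDomain hx' hs)) hC0 (Nat.cast_nonneg k)
  · simp only [upperLayer, headProj_graphMk, lastProj_graphMk]
    exact tendsto_integral_layer_upper (by linarith [hpos x' hx']) (hgc x' hx')

lemma tendsto_lowerLayer (hℓ : ContinuousOn ℓ (closedBall 0 ρ₁))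
    (hℓt : ContinuousOn ℓt (closedBall 0 ρ₁)) (hpos : ∀ x' : Esp d, ‖x'‖ < ρ₁ → 0 < ℓt x')
    {g : Esp (d + 1) → ℝ}
    (hg : ContinuousOn g (graphDomain d ρ₁ ℓ ℓt))
    {C : ℝ} (hC0 : 0 ≤ C) (hC : ∀ x ∈ graphDomain d ρ₁ ℓ ℓt, |g x| ≤ C)
    (hgc : ∀ x' : Esp d, ‖x'‖ < ρ₁ →
      ContinuousOn (fun s => g (graphMk d x' s)) (Icc (ℓ x' - ℓt x') (ℓ x'))) :
    Tendsto (fun k : ℕ => ∫ x in graphDomain d ρ₁ ℓ ℓt, lowerLayer ℓ ℓt k x * g x) atTop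
      (𝓝 (∫ x' in ball (0 : Esp d) ρ₁, g (graphMk d x' (ℓ x' - ℓt x')))) := by
  refine tendsto_integral_graphDomain_layer hℓ hℓt hpos (C := C) (fun k => ?_) (fun k x' hx' => ?_)
    fun x' hx' => ?_
  · exact integrableOn_layer_mul hℓ hℓt (continuousOn_lowerGap hℓ hℓt k)
      (continuousOn_upperGap hℓ k) hg hC k
  · simp only [lowerLayer, headProj_graphMk, lastProj_graphMk]
    rw [integral_layer_reflect (k : ℝ) (ℓ x' - ℓt x') (ℓ x') fun s => g (graphMk d x' s)]
    refine abs_integral_layer_le (by linarith [hpos x' hx'])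
      (fun s hs => hC _ (graphMk_mem_graphDomain hx' ?_)) hC0 (Nat.cast_nonneg k)
    exact ⟨by linarith [hs.2], by linarith [hs.1]⟩
  · simp only [lowerLayer, headProj_graphMk, lastProj_graphMk]
    simp_rw [fun k : ℕ =>
      integral_layer_reflect (k : ℝ) (ℓ x' - ℓt x') (ℓ x') fun s => g (graphMk d x' s)]
    have := tendsto_integral_layer_upper (a := ℓ x' - ℓt x') (b := ℓ x')
      (by linarith [hpos x' hx']) (h := fun s => g (graphMk d x' (ℓ x' - ℓt x' + ℓ x' - s)))
      ((hgc x' hx').comp (by fun_prop) fun s hs => ⟨by linarith [hs.2], by linarith [hs.1]⟩)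
    simpa using this

end Domain
end

noncomputable section
open MeasureTheory Metric Set
open scoped RealInnerProductSpace
open Filter Topology

variable {d : ℕ}

lemma sum_apply_single_mul {n : ℕ} (φ : Esp n →L[ℝ] ℝ) (v : Esp n) :
    ∑ i, φ (EuclideanSpace.single i 1) * v i = φ v := by
  have : v = ∑ i, v i • EuclideanSpace.single i (1 : ℝ) := by
    ext j
    simp [Finset.sum_apply, Pi.single_apply]
  conv_rhs => rw [this]
  rw [map_sum]
  exact Finset.sum_congr rfl fun i _ => by rw [map_smul, smul_eq_mul, mul_comm]

lemma divergence_smul {n : ℕ} {c : Esp n → ℝ} {F : Esp n → Esp n} {x : Esp n}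
    (hc : DifferentiableAt ℝ c x) (hF : DifferentiableAt ℝ F x) :
    divergence (fun z => c z • F z) x = c x * divergence F x + fderiv ℝ c x (F x) := by
  have h := (hc.hasFDerivAt.smul hF.hasFDerivAt).fderiv
  have h' : fderiv ℝ (fun z => c z • F z) x = c x • fderiv ℝ F x + (fderiv ℝ c x).smulRight (F x) :=
    h
  simp only [divergence, h', add_apply, smul_apply,
    ContinuousLinearMap.smulRight_apply, PiLp.add_apply, PiLp.smul_apply, smul_eq_mul,
    Finset.sum_add_distrib, ← Finset.mul_sum, sum_apply_single_mul]

lemma divergence_congr {n : ℕ} {F G : Esp n → Esp n} {x : Esp n} (h : F =ᶠ[𝓝 x] G) :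
    divergence F x = divergence G x := by
  simp only [divergence, h.fderiv_eq]

section Domain

variable {ρ₁ : ℝ} {ℓ ℓt : Esp d → ℝ}

lemma contDiffOn_domainCutoff (hℓ : ContDiffOn ℝ 1 ℓ (closedBall 0 ρ₁))
    (hℓt : ContDiffOn ℝ 1 ℓt (closedBall 0 ρ₁)) (k : ℝ) :
    ContDiffOn ℝ 1 (domainCutoff ℓ ℓt k) (graphDomain d ρ₁ ℓ ℓt) := by
  have hm : MapsTo (headProj d) (graphDomain d ρ₁ ℓ ℓt) (closedBall 0 ρ₁) :=
    mapsTo_headProj.mono_right ball_subset_closedBall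
  have h1 : ContDiffOn ℝ 1 (fun x => ℓ (headProj d x)) (graphDomain d ρ₁ ℓ ℓt) :=
    hℓ.comp (headProj d).contDiff.contDiffOn hm
  have h2 : ContDiffOn ℝ 1 (fun x => ℓt (headProj d x)) (graphDomain d ρ₁ ℓ ℓt) :=
    hℓt.comp (headProj d).contDiff.contDiffOn hm
  have h3 : ContDiffOn ℝ 1 (fun x => lastProj d x) (graphDomain d ρ₁ ℓ ℓt) :=
    (lastProj d).contDiff.contDiffOn
  exact (contDiff_cutoff.comp_contDiffOn (contDiffOn_const.mul (h1.sub h3))).mul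
    (contDiff_cutoff.comp_contDiffOn (contDiffOn_const.mul (h3.sub (h1.sub h2))))

lemma fderiv_domainCutoff {x : Esp (d + 1)} (hℓ : DifferentiableAt ℝ ℓ (headProj d x))
    (hm : DifferentiableAt ℝ (fun z => ℓ z - ℓt z) (headProj d x)) (k : ℝ) (v : Esp (d + 1)) :
    fderiv ℝ (domainCutoff ℓ ℓt k) x v =
      lowerLayer ℓ ℓt k x * ⟪v, graphMk d (-gradient (fun z => ℓ z - ℓt z) (headProj d x)) 1⟫
      - upperLayer ℓ ℓt k x * ⟪v, graphMk d (-gradient ℓ (headProj d x)) 1⟫ := by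
  have h1 : HasFDerivAt (fun x => k * (ℓ (headProj d x) - lastProj d x))
      (k • ((fderiv ℝ ℓ (headProj d x)).comp (headProj d) - lastProj d)) x :=
    ((hℓ.hasFDerivAt.comp x (headProj d).hasFDerivAt).sub (lastProj d).hasFDerivAt).const_mul k
  have h2 : HasFDerivAt (fun x => k * (lastProj d x - (ℓ (headProj d x) - ℓt (headProj d x))))
      (k • (lastProj d - (fderiv ℝ (fun z => ℓ z - ℓt z) (headProj d x)).comp (headProj d))) x :=
    ((lastProj d).hasFDerivAt.sub (hm.hasFDerivAt.comp x (headProj d).hasFDerivAt)).const_mul k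
  have h := ((hasDerivAt_cutoff _).comp_hasFDerivAt x h1).mul
    ((hasDerivAt_cutoff _).comp_hasFDerivAt x h2)
  have h' : fderiv ℝ (domainCutoff ℓ ℓt k) x = _ := h.fderiv
  rw [h']
  simp only [inner_graphMk, inner_neg_right, inner_gradient_eq_fderiv, upperLayer, lowerLayer,
    add_apply, smul_apply, sub_apply,
    ContinuousLinearMap.comp_apply, smul_eq_mul, Function.comp_apply]
  ring

/-- One-sided divergence theorem on a graph domain. -/
lemma integral_le_boundary_of_le_divergence (hρ₁ : 0 < ρ₁)
    (hℓ : ContDiffOn ℝ 1 ℓ (closedBall 0 ρ₁)) (hℓt : ContDiffOn ℝ 1 ℓt (closedBall 0 ρ₁))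
    (hpos : ∀ x' : Esp d, ‖x'‖ < ρ₁ → 0 < ℓt x') (hzero : ∀ x' : Esp d, ‖x'‖ = ρ₁ → ℓt x' = 0)
    {F : Esp (d + 1) → Esp (d + 1)} {L : Esp (d + 1) → ℝ}
    (hF : ContinuousOn F (closure (graphDomain d ρ₁ ℓ ℓt)))
    (hF1 : ContDiffOn ℝ 1 F (graphDomain d ρ₁ ℓ ℓt))
    (hL : IntegrableOn L (graphDomain d ρ₁ ℓ ℓt))
    (hLF : ∀ x ∈ graphDomain d ρ₁ ℓ ℓt, L x ≤ divergence F x) :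
    ∫ x in graphDomain d ρ₁ ℓ ℓt, L x ≤
      (∫ x' in ball (0 : Esp d) ρ₁, ⟪F (graphMk d x' (ℓ x')), graphMk d (-gradient ℓ x') 1⟫)
      - ∫ x' in ball (0 : Esp d) ρ₁, ⟪F (graphMk d x' (ℓ x' - ℓt x')),
          graphMk d (-gradient (fun z => ℓ z - ℓt z) x') 1⟫ := by
  set D := graphDomain d ρ₁ ℓ ℓt with hDdef
  have hℓc := hℓ.continuousOn
  have hℓtc := hℓt.continuousOn
  have hDo : IsOpen D := isOpen_graphDomain hℓc hℓtc
  have hDm := hDo.measurableSet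
  have hm : ContDiffOn ℝ 1 (fun z => ℓ z - ℓt z) (closedBall 0 ρ₁) := hℓ.sub hℓt
  have hdiff : ∀ {m : Esp d → ℝ}, ContDiffOn ℝ 1 m (closedBall 0 ρ₁) → ∀ x ∈ D,
      DifferentiableAt ℝ m (headProj d x) := fun hm x hx =>
    (hm.differentiableOn one_ne_zero).differentiableAt
      (mem_of_superset (isOpen_ball.mem_nhds (mapsTo_headProj hx)) ball_subset_closedBall)
  obtain ⟨CF, hCF⟩ := (isCompact_closure_graphDomain hℓc hℓtc).exists_bound_of_continuousOn hF
  -- the flux densities through the two graphs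
  have flux : ∀ m : Esp d → ℝ, ContDiffOn ℝ 1 m (closedBall 0 ρ₁) →
      ContinuousOn (fun x => ⟪F x, graphMk d (-gradient m (headProj d x)) 1⟫) D ∧
      (∃ C, 0 ≤ C ∧ ∀ x ∈ D, |⟪F x, graphMk d (-gradient m (headProj d x)) 1⟫| ≤ C) ∧
      ∀ x' : Esp d, ‖x'‖ < ρ₁ → ContinuousOn (fun s => ⟪F (graphMk d x' s),
        graphMk d (-gradient m (headProj d (graphMk d x' s))) 1⟫) (Icc (ℓ x' - ℓt x') (ℓ x')) := by
    intro m hm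
    refine ⟨?_, ?_, ?_⟩
    · refine (hF.mono subset_closure).inner ?_
      exact continuous_graphMk.comp_continuousOn ((continuousOn_comp_headProj
        (continuousOn_gradient isOpen_ball (hm.mono ball_subset_closedBall)).neg).prodMk
        continuousOn_const)
    · obtain ⟨Cg, hCg⟩ := exists_bound_gradient hρ₁ hm
      refine ⟨|CF * Cg + CF|, abs_nonneg _, fun x hx => ?_⟩
      refine le_trans ?_ (le_abs_self _)
      rw [inner_graphMk, mul_one]
      have h0 := hCF x (subset_closure hx)
      have h1 : ‖headProj d (F x)‖ ≤ ‖F x‖ := by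
        rw [EuclideanSpace.norm_eq, EuclideanSpace.norm_eq]
        refine Real.sqrt_le_sqrt ?_
        rw [Fin.sum_univ_castSucc]
        simp only [headProj_apply]
        linarith [sq_nonneg ‖(F x) (Fin.last d)‖]
      have h2 : |lastProj d (F x)| ≤ ‖F x‖ := PiLp.norm_apply_le (F x) (Fin.last d)
      have h3 : |⟪headProj d (F x), -gradient m (headProj d x)⟫| ≤ CF * Cg := by
        refine (abs_real_inner_le_norm _ _).trans ?_
        rw [norm_neg]
        exact mul_le_mul (h1.trans h0) (hCg _ (mapsTo_headProj hx)) (norm_nonneg _)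
          ((norm_nonneg _).trans h0)
      exact (abs_add_le _ _).trans (add_le_add h3 (h2.trans h0))
    · intro x' hx'
      simp only [headProj_graphMk]
      refine ContinuousOn.inner (hF.comp
        (continuous_graphMk.comp (Continuous.prodMk_right x')).continuousOn
        fun s hs => graphMk_mem_closure hx' (hpos _ hx') hs) continuousOn_const
  obtain ⟨hu1, ⟨Cu, hCu0, hu2⟩, hu3⟩ := flux ℓ hℓ
  obtain ⟨hl1, ⟨Cl, hCl0, hl2⟩, hl3⟩ := flux _ hm
  have limU := tendsto_upperLayer hℓc hℓtc hpos hu1 hCu0 hu2 hu3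
  have limL := tendsto_lowerLayer hℓc hℓtc hpos hl1 hCl0 hl2 hl3
  simp only [headProj_graphMk] at limU limL
  have hcutc : ∀ k : ℕ, ContinuousOn (domainCutoff ℓ ℓt (k : ℝ)) D := fun k =>
    (contDiffOn_domainCutoff hℓ hℓt k).continuousOn
  have hcut1 : ∀ (k : ℝ) x, |domainCutoff ℓ ℓt k x| ≤ 1 := fun k x => by
    rw [domainCutoff, abs_of_nonneg (mul_nonneg (cutoff_nonneg _) (cutoff_nonneg _))]
    exact mul_le_one₀ (cutoff_le_one _) (cutoff_nonneg _) (cutoff_le_one _)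
  have hcL : ∀ k : ℕ, IntegrableOn (fun x => domainCutoff ℓ ℓt k x * L x) D := fun k =>
    Integrable.bdd_mul hL ((hcutc k).aestronglyMeasurable hDm)
      (c := 1) (Eventually.of_forall fun x => hcut1 k x)
  have limC : Tendsto (fun k : ℕ => ∫ x in D, domainCutoff ℓ ℓt k x * L x) atTop
      (𝓝 (∫ x in D, L x)) := by
    refine tendsto_integral_of_dominated_convergence (fun x => |L x|)
      (fun k => (hcL k).aestronglyMeasurable) hL.abs (fun k => ?_) ?_
    · refine Eventually.of_forall fun x => ?_
      rw [Real.norm_eq_abs, abs_mul]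
      exact mul_le_of_le_one_left (abs_nonneg _) (hcut1 k x)
    · refine (ae_restrict_iff' hDm).2 (Eventually.of_forall fun x hx => ?_)
      obtain ⟨-, h2, h3⟩ := mem_graphDomain_iff.1 hx
      refine tendsto_const_nhds.congr' ?_
      have hlarge : ∀ {r : ℝ}, 0 < r → ∀ᶠ k : ℕ in atTop, 2 ≤ (k : ℝ) * r := fun hr =>
        (tendsto_natCast_atTop_atTop.atTop_mul_const hr).eventually_ge_atTop 2
      filter_upwards [hlarge (sub_pos.2 h2), hlarge (sub_pos.2 h3)] with k hk2 hk3
      rw [domainCutoff, cutoff_of_ge hk2, cutoff_of_ge hk3, one_mul, one_mul]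
  have step : ∀ᶠ k : ℕ in atTop, ∫ x in D, domainCutoff ℓ ℓt k x * L x ≤
      (∫ x in D, upperLayer ℓ ℓt k x * ⟪F x, graphMk d (-gradient ℓ (headProj d x)) 1⟫)
      - ∫ x in D, lowerLayer ℓ ℓt k x *
        ⟪F x, graphMk d (-gradient (fun z => ℓ z - ℓt z) (headProj d x)) 1⟫ := by
    filter_upwards [eventually_gt_atTop 0] with k hk
    have hk0 : (0 : ℝ) < k := by exact_mod_cast hk
    set S := shrunkRegion d ρ₁ ℓ ℓt (1 / (k : ℝ)) with hS
    have hSc : IsCompact S := isCompact_shrunkRegion hℓc hℓtc (by positivity)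
    have hSD : S ⊆ D := shrunkRegion_subset_graphDomain hzero (by positivity)
    set X : Esp (d + 1) → Esp (d + 1) :=
      D.indicator (fun x => domainCutoff ℓ ℓt k x • F x) with hX
    have hX0 : ∀ x ∉ S, X x = 0 := by
      intro x hx
      by_cases hxD : x ∈ D
      · rw [hX, indicator_of_mem hxD]
        have hz : domainCutoff ℓ ℓt k x = 0 := by
          by_contra hne
          refine hx ⟨(mem_graphDomain_iff.1 hxD).1.le, ?_, ?_⟩
          · by_contra! hlt
            refine hne ?_
            rw [domainCutoff, cutoff_of_le (t := k * (lastProj d x - _)), mul_zero]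
            have : (k : ℝ) * (1 / k) = 1 := by field_simp
            nlinarith
          · by_contra! hlt
            refine hne ?_
            rw [domainCutoff, cutoff_of_le (t := k * (ℓ _ - _)), zero_mul]
            have : (k : ℝ) * (1 / k) = 1 := by field_simp
            nlinarith
        rw [hz, zero_smul]
      · rw [hX, indicator_of_notMem hxD]
    have hsmul : ContDiffOn ℝ 1 (fun x => domainCutoff ℓ ℓt k x • F x) D :=
      (contDiffOn_domainCutoff hℓ hℓt k).smul hF1
    have hXD : ∀ x ∈ D, X =ᶠ[𝓝 x] fun x => domainCutoff ℓ ℓt k x • F x := fun x hx => by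
      filter_upwards [hDo.mem_nhds hx] with z hz
      rw [hX, indicator_of_mem hz]
    have hXS : ∀ x ∉ S, X =ᶠ[𝓝 x] fun _ => 0 := fun x hx => by
      filter_upwards [hSc.isClosed.isOpen_compl.mem_nhds hx] with z hz using hX0 z hz
    have hX1 : ContDiff ℝ 1 X := by
      rw [contDiff_iff_contDiffAt]
      intro x
      by_cases hx : x ∈ S
      · exact (hsmul.contDiffAt (hDo.mem_nhds (hSD hx))).congr_of_eventuallyEq (hXD x (hSD hx))
      · exact contDiffAt_const.congr_of_eventuallyEq (hXS x hx)
    have hXcs : HasCompactSupport X := HasCompactSupport.intro hSc fun x hx => hX0 x hx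
    have hdivD : ∀ x ∈ D, divergence X x = domainCutoff ℓ ℓt k x * divergence F x +
        (lowerLayer ℓ ℓt k x * ⟪F x, graphMk d (-gradient (fun z => ℓ z - ℓt z) (headProj d x)) 1⟫
        - upperLayer ℓ ℓt k x * ⟪F x, graphMk d (-gradient ℓ (headProj d x)) 1⟫) := by
      intro x hx
      rw [divergence_congr (hXD x hx), divergence_smul
        (((contDiffOn_domainCutoff hℓ hℓt k).contDiffAt (hDo.mem_nhds hx)).differentiableAt
          one_ne_zero) ((hF1.contDiffAt (hDo.mem_nhds hx)).differentiableAt one_ne_zero),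
        fderiv_domainCutoff (hdiff hℓ x hx) (hdiff hm x hx)]
    have hzero' : ∫ x in D, divergence X x = 0 := by
      rw [setIntegral_eq_integral_of_forall_compl_eq_zero]
      · exact integral_divergence_eq_zero hX1 hXcs
      · intro x hx
        rw [divergence_congr (hXS x fun h => hx (hSD h))]
        simp [divergence]
    have hiU := integrableOn_layer_mul hℓc hℓtc (continuousOn_upperGap hℓc k)
      (continuousOn_lowerGap hℓc hℓtc k) hu1 hu2 k
    have hiL := integrableOn_layer_mul hℓc hℓtc (continuousOn_lowerGap hℓc hℓtc k)
      (continuousOn_upperGap hℓc k) hl1 hl2 k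
    have hmono : ∫ x in D, (domainCutoff ℓ ℓt k x * L x +
        (lowerLayer ℓ ℓt k x * ⟪F x, graphMk d (-gradient (fun z => ℓ z - ℓt z) (headProj d x)) 1⟫
        - upperLayer ℓ ℓt k x * ⟪F x, graphMk d (-gradient ℓ (headProj d x)) 1⟫))
        ≤ ∫ x in D, divergence X x := by
      refine setIntegral_mono_on ((hcL k).add (hiL.sub hiU))
        ((continuous_divergence hX1).integrable_of_hasCompactSupport
          (hasCompactSupport_divergence hXcs)).integrableOn hDm fun x hx => ?_
      rw [hdivD x hx]
      have := mul_le_mul_of_nonneg_left (hLF x hx)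
        (show 0 ≤ domainCutoff ℓ ℓt k x from mul_nonneg (cutoff_nonneg _) (cutoff_nonneg _))
      linarith
    have e1 := integral_add (hcL k) (hiL.sub hiU)
    have e2 := integral_sub hiL hiU
    simp only [Pi.sub_apply] at e1
    rw [hzero'] at hmono
    simp only [upperLayer, lowerLayer] at hmono ⊢
    linarith
  exact le_of_tendsto_of_tendsto limC (limU.sub limL) step

end Domain
end

noncomputable section
open MeasureTheory Metric Set
open scoped RealInnerProductSpace
open Filter Topology

lemma continuousOn_integral_Icc {X F : Type*} [TopologicalSpace X] [NormedAddCommGroup F]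
    [NormedSpace ℝ F] {T : ℝ} (hT : 0 ≤ T) {A : Set X} {G : X → ℝ → F}
    (hG : ContinuousOn (fun q : X × ℝ => G q.1 q.2) (A ×ˢ Icc 0 T)) :
    ContinuousOn (fun x => ∫ t in (0 : ℝ)..T, G x t) A := by
  rw [continuousOn_iff_continuous_domRestrict]
  have hc : Continuous (Function.uncurry fun (x : A) (t : ℝ) => G x (projIcc 0 T hT t)) := by
    have := hG.comp_continuous (f := fun p : A × ℝ => ((p.1 : X), (projIcc 0 T hT p.2 : ℝ)))
      (by fun_prop) fun p => ⟨p.1.2, (projIcc 0 T hT p.2).2⟩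
    exact this
  refine (intervalIntegral.continuous_parametric_intervalIntegral_of_continuous'
    (μ := volume) hc 0 T).congr fun x => ?_
  refine intervalIntegral.integral_congr fun t ht => ?_
  rw [uIcc_of_le hT] at ht
  simp only [projIcc_of_mem hT ht]

section TimeDependent

variable {E : Type*} [NormedAddCommGroup E] [NormedSpace ℝ E] {T : ℝ}

/-- The (one-sided at the endpoints) time derivative on `[0, T]`. -/
def timeDeriv (T : ℝ) (Y : E → ℝ → ℝ) (x : E) (t : ℝ) : ℝ := derivWithin (Y x) (Icc 0 T) t

lemma hasDerivWithinAt_slice {Y : E → ℝ → ℝ} {A : Set E} {A' : E × ℝ →L[ℝ] ℝ} {x : E} (hx : x ∈ A)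
    {t : ℝ} (h : HasFDerivWithinAt (fun q : E × ℝ => Y q.1 q.2) A' (A ×ˢ Icc 0 T) (x, t)) :
    HasDerivWithinAt (Y x) (A' (0, 1)) (Icc 0 T) t := by
  have hc : HasDerivWithinAt (fun τ : ℝ => (x, τ)) ((0 : E), (1 : ℝ)) (Icc 0 T) t :=
    (hasDerivWithinAt_const t _ x).prodMk (hasDerivWithinAt_id t _)
  exact h.comp_hasDerivWithinAt t hc fun τ hτ => ⟨hx, hτ⟩

lemma hasDerivWithinAt_timeDeriv {Y : E → ℝ → ℝ} {A : Set E}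
    (hY : ContDiffOn ℝ 1 (fun q : E × ℝ => Y q.1 q.2) (A ×ˢ Icc 0 T)) {x : E} (hx : x ∈ A)
    {t : ℝ} (ht : t ∈ Icc 0 T) : HasDerivWithinAt (Y x) (timeDeriv T Y x t) (Icc 0 T) t :=
  (hasDerivWithinAt_slice hx (hY.differentiableOn one_ne_zero (x, t)
    ⟨hx, ht⟩).hasFDerivWithinAt).differentiableWithinAt.hasDerivWithinAt

lemma hasDerivAt_timeDeriv {Y : E → ℝ → ℝ} {A : Set E}
    (hY : ContDiffOn ℝ 1 (fun q : E × ℝ => Y q.1 q.2) (A ×ˢ Icc 0 T)) {x : E} (hx : x ∈ A)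
    {t : ℝ} (ht : t ∈ Ioo 0 T) : HasDerivAt (Y x) (timeDeriv T Y x t) t :=
  (hasDerivWithinAt_timeDeriv hY hx (Ioo_subset_Icc_self ht)).hasDerivAt (Icc_mem_nhds ht.1 ht.2)

/-- The time derivative of a `C¹` function on `A × [0, T]` is continuous up to the boundary, even
if `A` is not a set of unique differentiability. -/
lemma continuousOn_timeDeriv (hT : 0 < T) {Y : E → ℝ → ℝ} {A : Set E}
    (hY : ContDiffOn ℝ 1 (fun q : E × ℝ => Y q.1 q.2) (A ×ˢ Icc 0 T)) :
    ContinuousOn (fun q : E × ℝ => timeDeriv T Y q.1 q.2) (A ×ˢ Icc 0 T) := by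
  intro q hq
  have h1 : ContDiffWithinAt ℝ (0 + 1) (fun q : E × ℝ => Y q.1 q.2) (A ×ˢ Icc 0 T) q := by
    simpa using hY q hq
  obtain ⟨u, hu, -, -, f', hf', hf'c⟩ :=
    (contDiffWithinAt_succ_iff_hasFDerivWithinAt' (by simp)).1 h1
  rw [insert_eq_of_mem hq] at hu
  have hc : ContinuousWithinAt (fun z => f' z ((0 : E), (1 : ℝ))) (A ×ˢ Icc 0 T) q :=
    hf'c.continuousWithinAt.clm_apply continuousWithinAt_const
  have heq : ∀ z ∈ u, z ∈ A ×ˢ Icc 0 T → timeDeriv T Y z.1 z.2 = f' z (0, 1) := fun z hz hzA =>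
    (hasDerivWithinAt_slice hzA.1 (hf' z hz)).derivWithin (uniqueDiffOn_Icc hT _ hzA.2)
  refine hc.congr_of_eventuallyEq ?_ (heq q (mem_of_mem_nhdsWithin hq hu) hq)
  filter_upwards [hu, self_mem_nhdsWithin] with z hz hzA using heq z hz hzA

/-- The derivative of a function which is `C¹` up to the boundary is bounded in the interior. -/
lemma exists_bound_fderiv {g : E → ℝ} {K D : Set E} (hK : IsCompact K) (hD : IsOpen D)
    (hDK : D ⊆ K) (hg : ContDiffOn ℝ 1 g K) : ∃ C, ∀ x ∈ D, ‖fderiv ℝ g x‖ ≤ C := by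
  suffices h : ∃ C, ∀ x ∈ K ∩ D, ‖fderiv ℝ g x‖ ≤ C by
    obtain ⟨C, hC⟩ := h
    exact ⟨C, fun x hx => hC x ⟨hDK hx, hx⟩⟩
  refine hK.induction_on (p := fun S => ∃ C, ∀ x ∈ S ∩ D, ‖fderiv ℝ g x‖ ≤ C) ⟨0, by simp⟩ ?_ ?_ ?_
  · rintro s t hst ⟨C, hC⟩
    exact ⟨C, fun x hx => hC x ⟨hst hx.1, hx.2⟩⟩
  · rintro s t ⟨C, hC⟩ ⟨C', hC'⟩
    refine ⟨max C C', fun x hx => ?_⟩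
    rcases hx with ⟨h | h, hxD⟩
    · exact (hC x ⟨h, hxD⟩).trans (le_max_left _ _)
    · exact (hC' x ⟨h, hxD⟩).trans (le_max_right _ _)
  · intro q hq
    have h1 : ContDiffWithinAt ℝ (0 + 1) g K q := by simpa using hg q hq
    obtain ⟨u, hu, -, -, f', hf', hf'c⟩ :=
      (contDiffWithinAt_succ_iff_hasFDerivWithinAt' (by simp)).1 h1
    rw [insert_eq_of_mem hq] at hu
    have hc := hf'c.continuousWithinAt.norm
    have hlt : ∀ᶠ z in 𝓝[K] q, ‖f' z‖ < ‖f' q‖ + 1 := hc.eventually (gt_mem_nhds (lt_add_one _))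
    refine ⟨_, inter_mem hu hlt, ‖f' q‖ + 1, fun z hz => ?_⟩
    rw [((hf' z hz.1.1).hasFDerivAt (mem_of_superset (hD.mem_nhds hz.2) hDK)).fderiv]
    exact le_of_lt hz.1.2

section OpenSpace

variable {D : Set E} {Y : E → ℝ → ℝ}

lemma uniqueDiffOn_prod_Icc (hT : 0 < T) (hD : IsOpen D) : UniqueDiffOn ℝ (D ×ˢ Icc 0 T) :=
  hD.uniqueDiffOn.prod (uniqueDiffOn_Icc hT)

lemma fderivWithin_apply_time (hT : 0 < T)
    (hY : ContDiffOn ℝ 1 (fun q : E × ℝ => Y q.1 q.2) (D ×ˢ Icc 0 T)) {x : E} (hx : x ∈ D) {t : ℝ}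
    (ht : t ∈ Icc 0 T) :
    fderivWithin ℝ (fun q : E × ℝ => Y q.1 q.2) (D ×ˢ Icc 0 T) (x, t) (0, 1)
      = timeDeriv T Y x t :=
  ((hasDerivWithinAt_slice hx (hY.differentiableOn one_ne_zero (x, t)
    ⟨hx, ht⟩).hasFDerivWithinAt).derivWithin (uniqueDiffOn_Icc hT _ ht)).symm

lemma hasFDerivAt_space (hD : IsOpen D)
    (hY : ContDiffOn ℝ 1 (fun q : E × ℝ => Y q.1 q.2) (D ×ˢ Icc 0 T)) {x : E} (hx : x ∈ D) {t : ℝ}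
    (ht : t ∈ Icc 0 T) : HasFDerivAt (fun z => Y z t)
      ((fderivWithin ℝ (fun q : E × ℝ => Y q.1 q.2) (D ×ˢ Icc 0 T) (x, t)).comp
        (ContinuousLinearMap.inl ℝ E ℝ)) x := by
  have h := (hY.differentiableOn one_ne_zero (x, t) ⟨hx, ht⟩).hasFDerivWithinAt
  have hc : HasFDerivWithinAt (fun z : E => (z, t)) (ContinuousLinearMap.inl ℝ E ℝ) D x :=
    (hasFDerivAt_prodMk_left x t).hasFDerivWithinAt
  have hmaps : MapsTo (fun z : E => (z, t)) D (D ×ˢ Icc 0 T) := fun z hz => ⟨hz, ht⟩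
  exact (h.comp x hc hmaps).hasFDerivAt (hD.mem_nhds hx)

lemma fderivWithin_apply_space (hD : IsOpen D)
    (hY : ContDiffOn ℝ 1 (fun q : E × ℝ => Y q.1 q.2) (D ×ˢ Icc 0 T)) {x : E} (hx : x ∈ D) {t : ℝ}
    (ht : t ∈ Icc 0 T) (v : E) :
    fderivWithin ℝ (fun q : E × ℝ => Y q.1 q.2) (D ×ˢ Icc 0 T) (x, t) (v, 0)
      = fderiv ℝ (fun z => Y z t) x v := by
  rw [(hasFDerivAt_space hD hY hx ht).fderiv]; rfl

lemma fderivWithin_apply_pair (hT : 0 < T) (hD : IsOpen D)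
    (hY : ContDiffOn ℝ 1 (fun q : E × ℝ => Y q.1 q.2) (D ×ˢ Icc 0 T)) {x : E} (hx : x ∈ D) {t : ℝ}
    (ht : t ∈ Icc 0 T) (v : E) :
    fderivWithin ℝ (fun q : E × ℝ => Y q.1 q.2) (D ×ˢ Icc 0 T) (x, t) (v, 1)
      = timeDeriv T Y x t + fderiv ℝ (fun z => Y z t) x v := by
  rw [← fderivWithin_apply_time hT hY hx ht, ← fderivWithin_apply_space hD hY hx ht, ← map_add]
  simp

lemma contDiffOn_timeDeriv (hT : 0 < T) (hD : IsOpen D)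
    (hY : ContDiffOn ℝ 2 (fun q : E × ℝ => Y q.1 q.2) (D ×ˢ Icc 0 T)) :
    ContDiffOn ℝ 1 (fun q : E × ℝ => timeDeriv T Y q.1 q.2) (D ×ˢ Icc 0 T) := by
  have h : ContDiffOn ℝ 1 (fderivWithin ℝ (fun q : E × ℝ => Y q.1 q.2) (D ×ˢ Icc 0 T))
      (D ×ˢ Icc 0 T) :=
    hY.fderivWithin (uniqueDiffOn_prod_Icc hT hD) (by norm_num)
  refine (h.clm_apply (contDiffOn_const (c := ((0 : E), (1 : ℝ))))).congr fun q hq => ?_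
  exact (fderivWithin_apply_time hT (hY.of_le (by norm_num)) hq.1 hq.2).symm

/-- Differentiating a transport equation in time. -/
lemma transport_timeDeriv (hT : 0 < T) (hD : IsOpen D)
    (hY : ContDiffOn ℝ 2 (fun q : E × ℝ => Y q.1 q.2) (D ×ˢ Icc 0 T)) {x : E} (hx : x ∈ D)
    {v : E} {p c : ℝ} {r : ℝ → ℝ}
    (heq : ∀ t ∈ Ioo 0 T,
      timeDeriv T Y x t + fderiv ℝ (fun z => Y z t) x v + p * Y x t = r t * c)
    {t r' : ℝ} (ht : t ∈ Ioo 0 T) (hr : HasDerivAt r r' t) :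
    timeDeriv T (timeDeriv T Y) x t + fderiv ℝ (fun z => timeDeriv T Y z t) x v
      + p * timeDeriv T Y x t = r' * c := by
  set Yq : E × ℝ → ℝ := fun q => Y q.1 q.2 with hYq
  have hY1 : ContDiffOn ℝ 1 Yq (D ×ˢ Icc 0 T) := hY.of_le (by norm_num)
  have hmem : ∀ q : E × ℝ, q.1 ∈ D → q.2 ∈ Ioo 0 T → D ×ˢ Icc 0 T ∈ 𝓝 q := fun q h1 h2 =>
    prod_mem_nhds (hD.mem_nhds h1) (Icc_mem_nhds h2.1 h2.2)
  have hO : IsOpen (D ×ˢ Ioo (0 : ℝ) T) := hD.prod isOpen_Ioo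
  have hq : (x, t) ∈ D ×ˢ Ioo (0 : ℝ) T := ⟨hx, ht⟩
  have hat : ContDiffAt ℝ 2 Yq (x, t) := hY.contDiffAt (hmem _ hx ht)
  have hfd : DifferentiableAt ℝ (fderiv ℝ Yq) (x, t) :=
    (hat.fderiv_right (m := 1) (by norm_num)).differentiableAt one_ne_zero
  have hsymm : IsSymmSndFDerivAt ℝ Yq (x, t) :=
    hat.isSymmSndFDerivAt (by rw [minSmoothness_of_isRCLikeNormedField])
  have htl : ContDiffOn ℝ 1 (fun q : E × ℝ => timeDeriv T Y q.1 q.2) (D ×ˢ Icc 0 T) :=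
    contDiffOn_timeDeriv hT hD hY
  rw [← fderivWithin_apply_pair hT hD htl hx (Ioo_subset_Icc_self ht),
    fderivWithin_of_mem_nhds (hmem (x, t) hx ht)]
  have hu : (fun q : E × ℝ => timeDeriv T Y q.1 q.2) =ᶠ[𝓝 (x, t)]
      fun q => fderiv ℝ Yq q (0, 1) := by
    filter_upwards [hO.mem_nhds hq] with z hz
    rw [← fderivWithin_apply_time hT hY1 hz.1 (Ioo_subset_Icc_self hz.2),
      fderivWithin_of_mem_nhds (hmem _ hz.1 hz.2)]
  have hd1 : fderiv ℝ (fun q : E × ℝ => timeDeriv T Y q.1 q.2) (x, t) (v, 1)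
      = fderiv ℝ (fderiv ℝ Yq) (x, t) (v, 1) (0, 1) := by
    rw [hu.fderiv_eq, fderiv_clm_apply hfd (differentiableAt_const _)]
    simp
  rw [hd1, hsymm]
  have hcurve : HasDerivAt (fun τ : ℝ => (x, τ)) ((0 : E), (1 : ℝ)) t :=
    (hasDerivAt_const t x).prodMk (hasDerivAt_id t)
  have hA : HasDerivAt (fun τ => fderiv ℝ Yq (x, τ) (v, 1))
      (fderiv ℝ (fderiv ℝ Yq) (x, t) (0, 1) (v, 1)) t := by
    have h := hfd.hasFDerivAt.comp_hasDerivAt t hcurve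
    simpa using h.clm_apply (hasDerivAt_const t ((v : E), (1 : ℝ)))
  have hB := (hA.add ((hasDerivAt_timeDeriv hY1 hx ht).const_mul p))
  have hE : (fun τ => fderiv ℝ Yq (x, τ) (v, 1) + p * Y x τ) =ᶠ[𝓝 t] fun τ => r τ * c := by
    filter_upwards [isOpen_Ioo.mem_nhds ht] with τ hτ
    rw [← heq τ hτ, ← fderivWithin_apply_pair hT hD hY1 hx (Ioo_subset_Icc_self hτ),
      fderivWithin_of_mem_nhds (hmem (x, τ) hx hτ)]
  exact hB.unique ((hr.mul_const c).congr_of_eventuallyEq hE)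

/-- A transport equation which holds for interior times extends to the endpoints. -/
lemma transport_closed (hT : 0 < T) (hD : IsOpen D)
    (hY : ContDiffOn ℝ 1 (fun q : E × ℝ => Y q.1 q.2) (D ×ˢ Icc 0 T)) {x : E} (hx : x ∈ D)
    {v : E} {p c : ℝ} {r : ℝ → ℝ} (hr : ContinuousOn r (Icc 0 T))
    (heq : ∀ t ∈ Ioo 0 T,
      timeDeriv T Y x t + fderiv ℝ (fun z => Y z t) x v + p * Y x t = r t * c)
    {t : ℝ} (ht : t ∈ Icc 0 T) :
    timeDeriv T Y x t + fderiv ℝ (fun z => Y z t) x v + p * Y x t = r t * c := by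
  have hslice : ContinuousOn (fun τ : ℝ => (x, τ)) (Icc 0 T) := by fun_prop
  have hmaps : MapsTo (fun τ : ℝ => (x, τ)) (Icc 0 T) (D ×ˢ Icc 0 T) := fun τ hτ => ⟨hx, hτ⟩
  have h1 : ContinuousOn (fun τ => fderivWithin ℝ (fun q : E × ℝ => Y q.1 q.2) (D ×ˢ Icc 0 T)
      (x, τ) (v, 1)) (Icc 0 T) :=
    ((hY.continuousOn_fderivWithin (uniqueDiffOn_prod_Icc hT hD) le_rfl).comp hslice
      hmaps).clm_apply continuousOn_const
  have h2 : ContinuousOn (Y x) (Icc 0 T) := hY.continuousOn.comp hslice hmaps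
  have key : EqOn (fun τ => fderivWithin ℝ (fun q : E × ℝ => Y q.1 q.2) (D ×ˢ Icc 0 T)
      (x, τ) (v, 1) + p * Y x τ) (fun τ => r τ * c) (Icc 0 T) := by
    refine EqOn.of_subset_closure (s := Ioo 0 T) ?_ (h1.add (continuousOn_const.mul h2))
      (hr.mul continuousOn_const) Ioo_subset_Icc_self (by rw [closure_Ioo hT.ne])
    intro τ hτ
    simp only
    rw [fderivWithin_apply_pair hT hD hY hx (Ioo_subset_Icc_self hτ), heq τ hτ]
  have := key ht
  simp only at this
  rwa [fderivWithin_apply_pair hT hD hY hx ht] at this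

/-- Differentiation under the integral sign over a compact time interval. -/
lemma contDiffOn_integral_Icc [ProperSpace E] (hT : 0 < T) (hD : IsOpen D)
    (hY : ContDiffOn ℝ 1 (fun q : E × ℝ => Y q.1 q.2) (D ×ˢ Icc 0 T)) :
    ContDiffOn ℝ 1 (fun x => ∫ t in (0 : ℝ)..T, Y x t) D ∧
    ∀ x ∈ D, ∀ v, fderiv ℝ (fun x => ∫ t in (0 : ℝ)..T, Y x t) x v
      = ∫ t in (0 : ℝ)..T, fderiv ℝ (fun z => Y z t) x v := by
  set F' : E → ℝ → E →L[ℝ] ℝ := fun x t =>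
    (fderivWithin ℝ (fun q : E × ℝ => Y q.1 q.2) (D ×ˢ Icc 0 T) (x, t)).comp
      (ContinuousLinearMap.inl ℝ E ℝ) with hF'
  have hF'c : ContinuousOn (fun q : E × ℝ => F' q.1 q.2) (D ×ˢ Icc 0 T) :=
    (hY.continuousOn_fderivWithin (uniqueDiffOn_prod_Icc hT hD) le_rfl).clm_comp continuousOn_const
  have hmaps : ∀ x ∈ D, MapsTo (fun τ : ℝ => (x, τ)) (Icc 0 T) (D ×ˢ Icc 0 T) :=
    fun x hx τ hτ => ⟨hx, hτ⟩
  have hslice : ∀ x : E, ContinuousOn (fun τ : ℝ => (x, τ)) (Icc 0 T) := fun x => by fun_prop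
  have hYc : ∀ x ∈ D, ContinuousOn (Y x) (Icc 0 T) := fun x hx =>
    hY.continuousOn.comp (hslice x) (hmaps x hx)
  have hF'x : ∀ x ∈ D, ContinuousOn (F' x) (Icc 0 T) := fun x hx =>
    hF'c.comp (hslice x) (hmaps x hx)
  have hder : ∀ x₀ ∈ D, HasFDerivAt (fun x => ∫ t in (0 : ℝ)..T, Y x t)
      (∫ t in (0 : ℝ)..T, F' x₀ t) x₀ := by
    intro x₀ hx₀
    obtain ⟨ε, hε, hball⟩ := Metric.nhds_basis_closedBall.mem_iff.1 (hD.mem_nhds hx₀)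
    obtain ⟨C, hC⟩ := ((isCompact_closedBall x₀ ε).prod
      (isCompact_Icc (a := (0 : ℝ)) (b := T))).exists_bound_of_continuousOn
        (hF'c.mono (prod_mono hball subset_rfl))
    have hIoc : uIoc 0 T ⊆ Icc 0 T := by rw [uIoc_of_le hT.le]; exact Ioc_subset_Icc_self
    refine intervalIntegral.hasFDerivAt_integral_of_dominated_of_fderiv_le (F' := F')
      (bound := fun _ => C) (closedBall_mem_nhds x₀ hε) ?_ ?_ ?_ ?_ intervalIntegrable_const ?_
    · filter_upwards [hD.mem_nhds hx₀] with x hx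
      exact ((hYc x hx).mono hIoc).aestronglyMeasurable measurableSet_uIoc
    · exact ContinuousOn.intervalIntegrable (by rw [uIcc_of_le hT.le]; exact hYc x₀ hx₀)
    · exact ((hF'x x₀ hx₀).mono hIoc).aestronglyMeasurable measurableSet_uIoc
    · exact Eventually.of_forall fun t ht x hx => hC (x, t) ⟨hx, hIoc ht⟩
    · exact Eventually.of_forall fun t ht x hx => hasFDerivAt_space hD hY (hball hx) (hIoc ht)
  constructor
  · have : ContDiffOn ℝ (0 + 1) (fun x => ∫ t in (0 : ℝ)..T, Y x t) D := by
      rw [contDiffOn_succ_iff_fderiv_of_isOpen hD]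
      refine ⟨fun x hx => (hder x hx).differentiableAt.differentiableWithinAt, by simp, ?_⟩
      rw [contDiffOn_zero]
      exact (continuousOn_integral_Icc hT.le hF'c).congr fun x hx => (hder x hx).fderiv
    simpa using this
  · intro x hx v
    rw [(hder x hx).fderiv, ContinuousLinearMap.intervalIntegral_apply
      (ContinuousOn.intervalIntegrable (by rw [uIcc_of_le hT.le]; exact hF'x x hx))]
    refine intervalIntegral.integral_congr fun t ht => ?_
    rw [uIcc_of_le hT.le] at ht
    exact fderivWithin_apply_space hD hY hx ht v

end OpenSpace

end TimeDependent
end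

noncomputable section
open MeasureTheory Metric Set
open scoped RealInnerProductSpace
open Filter Topology

/-- Weighted energy identity in time, with the lower-order terms absorbed. -/
lemma energy_time {T κ M B p c : ℝ} (hT : 0 < T) (hκ : 0 < κ) {w w' g r : ℝ → ℝ}
    (hw : ∀ t ∈ Icc 0 T, HasDerivWithinAt w (w' t) (Icc 0 T) t) (hw' : ContinuousOn w' (Icc 0 T))
    (hg : ContinuousOn g (Icc 0 T)) (heq : ∀ t ∈ Ioo 0 T, w' t + g t + p * w t = r t * c)
    (hp : |p| ≤ M) (hr : ∀ t ∈ Ioo 0 T, |r t| ≤ B) :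
    w 0 ^ 2 - Real.exp (-(κ * T)) * w T ^ 2
        - (κ + 1 + 2 * M) * (∫ t in (0 : ℝ)..T, w t ^ 2 * Real.exp (-(κ * t))) - B ^ 2 * c ^ 2 / κ
      ≤ ∫ t in (0 : ℝ)..T, 2 * w t * g t * Real.exp (-(κ * t)) := by
  have hwc : ContinuousOn w (Icc 0 T) := fun t ht => (hw t ht).continuousWithinAt
  have hec : Continuous fun t : ℝ => Real.exp (-(κ * t)) := by fun_prop
  have hint : ∀ {h : ℝ → ℝ}, ContinuousOn h (Icc 0 T) → IntervalIntegrable h volume 0 T :=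
    fun hh => ContinuousOn.intervalIntegrable (by rwa [uIcc_of_le hT.le])
  have hexp : ∀ t, HasDerivAt (fun t : ℝ => Real.exp (-(κ * t))) (-κ * Real.exp (-(κ * t))) t := by
    intro t
    have h := (((hasDerivAt_id t).const_mul κ).neg).exp
    simp only [id, Pi.neg_apply] at h
    exact h.congr_deriv (by ring)
  have hftc : ∫ t in (0 : ℝ)..T, (2 * w t * w' t - κ * w t ^ 2) * Real.exp (-(κ * t))
      = w T ^ 2 * Real.exp (-(κ * T)) - w 0 ^ 2 * Real.exp (-(κ * 0)) := by
    refine intervalIntegral.integral_eq_sub_of_hasDerivAt_of_le hT.le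
      (f := fun t => w t ^ 2 * Real.exp (-(κ * t))) ?_ ?_ ?_
    · exact (hwc.pow 2).mul hec.continuousOn
    · intro t ht
      have h1 := (hw t (Ioo_subset_Icc_self ht)).hasDerivAt (Icc_mem_nhds ht.1 ht.2)
      refine ((h1.pow 2).mul (hexp t)).congr_deriv ?_
      simp only [Pi.pow_apply]
      ring
    · exact hint (by fun_prop)
  have hexpint : ∫ t in (0 : ℝ)..T, Real.exp (-(κ * t)) ≤ 1 / κ := by
    have h : ∫ t in (0 : ℝ)..T, Real.exp (-(κ * t))
        = -(1 / κ) * Real.exp (-(κ * T)) - -(1 / κ) * Real.exp (-(κ * 0)) := by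
      refine intervalIntegral.integral_eq_sub_of_hasDerivAt
        (f := fun t => -(1 / κ) * Real.exp (-(κ * t))) (fun t _ => ?_) (hint hec.continuousOn)
      refine ((hexp t).const_mul (-(1 / κ))).congr_deriv ?_
      field_simp
    rw [h]
    have : 0 ≤ 1 / κ * Real.exp (-(κ * T)) := by positivity
    simp only [mul_zero, neg_zero, Real.exp_zero]
    linarith
  have hmono : ∫ t in (0 : ℝ)..T, (-((2 * w t * w' t - κ * w t ^ 2) * Real.exp (-(κ * t)))
      - (κ + 1 + 2 * M) * (w t ^ 2 * Real.exp (-(κ * t)))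
      - B ^ 2 * c ^ 2 * Real.exp (-(κ * t)))
      ≤ ∫ t in (0 : ℝ)..T, 2 * w t * g t * Real.exp (-(κ * t)) := by
    refine intervalIntegral.integral_mono_on_of_le_Ioo hT.le (hint (by fun_prop))
      (hint (by fun_prop)) fun t ht => ?_
    have hgt : g t = r t * c - w' t - p * w t := by linarith [heq t ht]
    have hrc : (r t * c) ^ 2 ≤ B ^ 2 * c ^ 2 := by
      rw [mul_pow]
      exact mul_le_mul_of_nonneg_right (sq_le_sq' (abs_le.1 (hr t ht)).1 (abs_le.1 (hr t ht)).2)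
        (sq_nonneg c)
    have hpw : p * w t ^ 2 ≤ M * w t ^ 2 :=
      mul_le_mul_of_nonneg_right (le_of_abs_le hp) (sq_nonneg _)
    have hk : -(2 * w t * w' t - κ * w t ^ 2) - (κ + 1 + 2 * M) * w t ^ 2 - B ^ 2 * c ^ 2
        ≤ 2 * w t * g t := by
      rw [hgt]
      nlinarith [sq_nonneg (w t + r t * c)]
    have := mul_le_mul_of_nonneg_right hk (Real.exp_pos (-(κ * t))).le
    linarith
  rw [intervalIntegral.integral_sub (hint (by fun_prop)) (hint (by fun_prop)),
    intervalIntegral.integral_sub (hint (by fun_prop)) (hint (by fun_prop)),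
    intervalIntegral.integral_neg, hftc, intervalIntegral.integral_const_mul,
    intervalIntegral.integral_const_mul] at hmono
  have h3 : B ^ 2 * c ^ 2 * (∫ t in (0 : ℝ)..T, Real.exp (-(κ * t))) ≤ B ^ 2 * c ^ 2 * (1 / κ) :=
    mul_le_mul_of_nonneg_left hexpint (by positivity)
  simp only [mul_zero, neg_zero, Real.exp_zero] at hmono
  rw [mul_one_div] at h3
  linarith

/-- The time-integrated weighted energy density. -/
def energyDensity {E : Type*} (T κ : ℝ) (u : E → ℝ → ℝ) (x : E) : ℝ :=
  ∫ t in (0 : ℝ)..T, u x t ^ 2 * Real.exp (-(κ * t))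

lemma continuousOn_energyDensity {E : Type*} [TopologicalSpace E] {T κ : ℝ}
    {u : E → ℝ → ℝ} {K : Set E} (hT : 0 < T)
    (hu : ContinuousOn (fun q : E × ℝ => u q.1 q.2) (K ×ˢ Icc 0 T)) :
    ContinuousOn (energyDensity T κ u) K :=
  continuousOn_integral_Icc hT.le (G := fun x t => u x t ^ 2 * Real.exp (-(κ * t)))
    ((hu.pow 2).mul (by fun_prop))

section Energy

variable {E : Type*} [NormedAddCommGroup E] [NormedSpace ℝ E] {T κ : ℝ} {u : E → ℝ → ℝ}
  {D : Set E}

lemma contDiffOn_energyIntegrand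
    (hu : ContDiffOn ℝ 1 (fun q : E × ℝ => u q.1 q.2) (D ×ˢ Icc 0 T)) :
    ContDiffOn ℝ 1 (fun q : E × ℝ => u q.1 q.2 ^ 2 * Real.exp (-(κ * q.2))) (D ×ˢ Icc 0 T) :=
  (hu.pow 2).mul (by fun_prop)

lemma contDiffOn_energyDensity [ProperSpace E] (hT : 0 < T) (hD : IsOpen D)
    (hu : ContDiffOn ℝ 1 (fun q : E × ℝ => u q.1 q.2) (D ×ˢ Icc 0 T)) :
    ContDiffOn ℝ 1 (energyDensity T κ u) D :=
  (contDiffOn_integral_Icc hT hD (Y := fun x t => u x t ^ 2 * Real.exp (-(κ * t)))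
    (contDiffOn_energyIntegrand hu)).1

/-- Lower bound for the derivative of the energy density along a transport direction. -/
lemma energyDensity_transport [ProperSpace E] (hT : 0 < T) (hκ : 0 < κ) (hD : IsOpen D)
    (hu : ContDiffOn ℝ 1 (fun q : E × ℝ => u q.1 q.2) (D ×ˢ Icc 0 T)) {x v : E} (hx : x ∈ D)
    {M B p c : ℝ} {r : ℝ → ℝ}
    (heq : ∀ t ∈ Ioo 0 T,
      timeDeriv T u x t + fderiv ℝ (fun z => u z t) x v + p * u x t = r t * c)
    (hp : |p| ≤ M) (hr : ∀ t ∈ Ioo 0 T, |r t| ≤ B) :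
    u x 0 ^ 2 - Real.exp (-(κ * T)) * u x T ^ 2 - (κ + 1 + 2 * M) * energyDensity T κ u x
      - B ^ 2 * c ^ 2 / κ ≤ fderiv ℝ (energyDensity T κ u) x v := by
  have hslice : ContinuousOn (fun τ : ℝ => (x, τ)) (Icc 0 T) := by fun_prop
  have hmaps : MapsTo (fun τ : ℝ => (x, τ)) (Icc 0 T) (D ×ˢ Icc 0 T) := fun τ hτ => ⟨hx, hτ⟩
  have hg : ContinuousOn (fun τ => fderiv ℝ (fun z => u z τ) x v) (Icc 0 T) :=
    (((hu.continuousOn_fderivWithin (uniqueDiffOn_prod_Icc hT hD) le_rfl).comp hslice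
      hmaps).clm_apply (continuousOn_const (c := (v, (0 : ℝ))))).congr fun τ hτ =>
        (fderivWithin_apply_space hD hu hx hτ v).symm
  refine (energy_time hT hκ (fun t ht => hasDerivWithinAt_timeDeriv hu hx ht)
    ((continuousOn_timeDeriv hT hu).comp hslice hmaps) hg heq hp hr).trans (le_of_eq ?_)
  have h := (contDiffOn_integral_Icc hT hD (Y := fun x t => u x t ^ 2 * Real.exp (-(κ * t)))
    (contDiffOn_energyIntegrand hu)).2 x hx v
  refine Eq.trans ?_ h.symm
  refine intervalIntegral.integral_congr fun t ht => ?_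
  rw [uIcc_of_le hT.le] at ht
  have hd : DifferentiableAt ℝ (fun z => u z t) x :=
    (hasFDerivAt_space hD hu hx ht).differentiableAt
  have h2 := ((hd.hasFDerivAt.pow 2).mul_const (Real.exp (-(κ * t)))).fderiv
  rw [h2]
  simp
  ring

end Energy
end

noncomputable section
open MeasureTheory Metric Set
open scoped RealInnerProductSpace
open Filter Topology

section Weight

variable {n : ℕ} {H : Esp n → Esp n} {x : Esp n} {M δ₀ η : ℝ}

lemma fderiv_psiW (hH : DifferentiableAt ℝ H x) :
    fderiv ℝ (psiW H) x (H x) = ‖H x‖ ^ 2 + ⟪x, fderiv ℝ H x (H x)⟫ := by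
  have h : fderiv ℝ (psiW H) x (H x) = fderiv ℝ (fun z => ⟪id z, H z⟫) x (H x) := rfl
  rw [h, fderiv_inner_apply ℝ differentiableAt_id hH]
  simp [add_comm]

lemma abs_psiW_le (hx : ‖x‖ ≤ 1) (hHM : ‖H x‖ ≤ M) : |psiW H x| ≤ M := by
  have h := abs_real_inner_le_norm x (H x)
  have h2 : ‖x‖ * ‖H x‖ ≤ 1 * ‖H x‖ := mul_le_mul_of_nonneg_right hx (norm_nonneg _)
  rw [psiW]
  linarith

lemma le_fderiv_psiW (hH : DifferentiableAt ℝ H x) (hδ₀ : 0 ≤ δ₀) (hx : ‖x‖ ≤ η)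
    (hHM : ‖H x‖ ≤ M) (hDM : ‖fderiv ℝ H x‖ ≤ M) (hδ : δ₀ ≤ ‖H x‖) (hη : η * M ^ 2 ≤ δ₀ ^ 2 / 2) :
    δ₀ ^ 2 / 2 ≤ fderiv ℝ (psiW H) x (H x) := by
  have hM : 0 ≤ M := (norm_nonneg _).trans hHM
  have h1 : |⟪x, fderiv ℝ H x (H x)⟫| ≤ η * M ^ 2 := by
    calc _ ≤ ‖x‖ * ‖fderiv ℝ H x (H x)‖ := abs_real_inner_le_norm _ _
      _ ≤ η * (M * M) := by
          refine mul_le_mul hx ?_ (norm_nonneg _) ((norm_nonneg _).trans hx)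
          exact ((fderiv ℝ H x).le_opNorm _).trans (mul_le_mul hDM hHM (norm_nonneg _) hM)
      _ = η * M ^ 2 := by ring
  have h2 : δ₀ ^ 2 ≤ ‖H x‖ ^ 2 := pow_le_pow_left₀ hδ₀ hδ 2
  rw [fderiv_psiW hH]
  linarith [(abs_le.1 h1).1]

/-- The divergence of `e^{s ψ} Z H` is bounded below when `Z` satisfies a transport inequality. -/
lemma le_divergence_weighted {Z : Esp n → ℝ} {s κ a : ℝ} (hH : DifferentiableAt ℝ H x)
    (hψ : DifferentiableAt ℝ (psiW H) x) (hZ : DifferentiableAt ℝ Z x) (hZ0 : 0 ≤ Z x)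
    (hDM : ‖fderiv ℝ H x‖ ≤ M) (hψH : δ₀ ^ 2 / 2 ≤ fderiv ℝ (psiW H) x (H x)) (hs : 0 ≤ s)
    (hsκ : s * δ₀ ^ 2 = 4 * κ) (hκ : n * M + 2 + 2 * M ≤ κ)
    (hZH : a - (κ + 1 + 2 * M) * Z x ≤ fderiv ℝ Z x (H x)) :
    Real.exp (s * psiW H x) * (Z x + a)
      ≤ divergence (fun z => (Real.exp (s * psiW H z) * Z z) • H z) x := by
  have he : HasFDerivAt (fun z => Real.exp (s * psiW H z))
      (Real.exp (s * psiW H x) • s • fderiv ℝ (psiW H) x) x :=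
    (hψ.hasFDerivAt.const_mul s).exp
  have hc := he.mul hZ.hasFDerivAt
  have hdiv := divergence_smul hc.differentiableAt hH
  have hdH : -(n * M) ≤ divergence H x := by
    have h1 := abs_sum_apply_single_le (fderiv ℝ H x)
    have h2 : (n : ℝ) * ‖fderiv ℝ H x‖ ≤ n * M := mul_le_mul_of_nonneg_left hDM n.cast_nonneg
    have h3 := (abs_le.1 h1).1
    rw [divergence]
    linarith
  have hfd := congrArg (fun A => A (H x)) hc.fderiv
  simp only [add_apply, smul_apply, smul_eq_mul] at hfd
  refine le_trans ?_ (le_of_eq hdiv.symm)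
  rw [hfd]
  have hkey : Z x + a ≤ Z x * divergence H x
      + (fderiv ℝ Z x (H x) + Z x * (s * fderiv ℝ (psiW H) x (H x))) := by
    have h1 : s * (δ₀ ^ 2 / 2) ≤ s * fderiv ℝ (psiW H) x (H x) :=
      mul_le_mul_of_nonneg_left hψH hs
    have h2 : 0 ≤ Z x * (divergence H x + s * fderiv ℝ (psiW H) x (H x) - (κ + 2 + 2 * M)) :=
      mul_nonneg hZ0 (by linarith)
    linarith
  have := mul_le_mul_of_nonneg_left hkey (Real.exp_pos (s * psiW H x)).le
  refine this.trans (le_of_eq ?_)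
  simp only [Pi.mul_apply]
  ring

end Weight

end

noncomputable section
open MeasureTheory Metric Set
open scoped RealInnerProductSpace
open Filter Topology

lemma exp_mul_integral_sq_le_energyDensity {E : Type*} {T κ : ℝ}
    {u : E → ℝ → ℝ} {x : E} (hT : 0 < T) (hκ : 0 ≤ κ) (hu : ContinuousOn (u x) (Icc 0 T)) :
    Real.exp (-(κ * T)) * (∫ t in (0 : ℝ)..T, u x t ^ 2) ≤ energyDensity T κ u x := by
  rw [energyDensity, ← intervalIntegral.integral_const_mul]
  refine intervalIntegral.integral_mono_on hT.le ?_ ?_ fun t ht => ?_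
  · exact ContinuousOn.intervalIntegrable (by rw [uIcc_of_le hT.le]; fun_prop)
  · exact ContinuousOn.intervalIntegrable (by rw [uIcc_of_le hT.le]; fun_prop)
  · rw [mul_comm]
    refine mul_le_mul_of_nonneg_left (Real.exp_le_exp.2 ?_) (sq_nonneg _)
    have := mul_le_mul_of_nonneg_left ht.2 hκ
    linarith

lemma energyDensity_le_integral_sq {E : Type*} {T κ : ℝ}
    {u : E → ℝ → ℝ} {x : E} (hT : 0 < T) (hκ : 0 ≤ κ) (hu : ContinuousOn (u x) (Icc 0 T)) :
    energyDensity T κ u x ≤ ∫ t in (0 : ℝ)..T, u x t ^ 2 := by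
  rw [energyDensity]
  refine intervalIntegral.integral_mono_on hT.le ?_ ?_ fun t ht => ?_
  · exact ContinuousOn.intervalIntegrable (by rw [uIcc_of_le hT.le]; fun_prop)
  · exact ContinuousOn.intervalIntegrable (by rw [uIcc_of_le hT.le]; fun_prop)
  · refine mul_le_of_le_one_right (sq_nonneg _) (Real.exp_le_one_iff.2 ?_)
    have := mul_nonneg hκ ht.1
    linarith

lemma energyDensity_nonneg {E : Type*} {T κ : ℝ} {u : E → ℝ → ℝ} {x : E} (hT : 0 < T) :
    0 ≤ energyDensity T κ u x :=
  intervalIntegral.integral_nonneg hT.le fun t _ => by positivity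

/-- Pointwise Carleman inequality for the time derivative `u` of a solution of the linearized
source problem. -/
lemma carleman_le_divergence {n : ℕ} {D U : Set (Esp n)} (hD : IsOpen D) (hU : IsOpen U)
    (hDU : D ⊆ U) {H : Esp n → Esp n} {T M δ₀ η r₀ R₁ B κ s : ℝ} (hT : 0 < T) (hδ₀ : 0 ≤ δ₀)
    (hH : ContDiffOn ℝ 1 H U) (hHM : ∀ x ∈ U, ‖H x‖ ≤ M) (hDM : ∀ x ∈ U, ‖fderiv ℝ H x‖ ≤ M)
    (hδ : ∀ x ∈ D, δ₀ ≤ ‖H x‖) (hxη : ∀ x ∈ D, ‖x‖ ≤ η) (hη1 : η ≤ 1) (hη : η * M ^ 2 ≤ δ₀ ^ 2 / 2)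
    {p f : Esp n → ℝ} (hp : ∀ x ∈ D, |p x| ≤ M) {R y : Esp n → ℝ → ℝ}
    (hR : ContDiffOn ℝ 1 (fun q : Esp n × ℝ => R q.1 q.2) (D ×ˢ Icc 0 T))
    (hr₀ : 0 ≤ r₀) (hR0 : ∀ x ∈ D, r₀ ≤ |R x 0|) (hRT : ∀ x ∈ D, |R x T| ≤ R₁)
    (hRt : ∀ x ∈ D, ∀ t ∈ Ioo 0 T, |timeDeriv T R x t| ≤ B)
    (hy : ContDiffOn ℝ 2 (fun q : Esp n × ℝ => y q.1 q.2) (D ×ˢ Icc 0 T))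
    (heq : ∀ x ∈ D, ∀ t ∈ Ioo 0 T,
      timeDeriv T y x t + fderiv ℝ (fun z => y z t) x (H x) + p x * y x t = R x t * f x)
    (hy0 : ∀ x ∈ D, y x 0 = 0) (hκ0 : 0 < κ) (hs : 0 ≤ s) (hsκ : s * δ₀ ^ 2 = 4 * κ)
    (hκ1 : n * M + 2 + 2 * M ≤ κ) (hκ2 : B ^ 2 / κ ≤ r₀ ^ 2 / 4)
    (hκ3 : 3 * R₁ ^ 2 * Real.exp (-(κ * T)) ≤ r₀ ^ 2 / 4) {x : Esp n} (hx : x ∈ D) :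
    Real.exp (-(s * M)) * Real.exp (-(κ * T)) * (∫ t in (0 : ℝ)..T, timeDeriv T y x t ^ 2)
        + Real.exp (-(s * M)) * (r₀ ^ 2 / 2) * f x ^ 2
        - 3 * M ^ 2 * Real.exp (s * M) * (y x T ^ 2 + ‖gradient (fun z => y z T) x‖ ^ 2)
      ≤ divergence
          (fun z => (Real.exp (s * psiW H z) * energyDensity T κ (timeDeriv T y) z) • H z) x := by
  have hM : 0 ≤ M := (norm_nonneg _).trans (hHM x (hDU hx))
  have h0T : (0 : ℝ) ∈ Icc 0 T := ⟨le_rfl, hT.le⟩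
  have hTT : T ∈ Icc 0 T := ⟨hT.le, le_rfl⟩
  have hy1 : ContDiffOn ℝ 1 (fun q : Esp n × ℝ => y q.1 q.2) (D ×ˢ Icc 0 T) :=
    hy.of_le (by norm_num)
  have hu := contDiffOn_timeDeriv hT hD hy
  have hslice : ContinuousOn (fun τ : ℝ => (x, τ)) (Icc 0 T) := by fun_prop
  have hmaps : MapsTo (fun τ : ℝ => (x, τ)) (Icc 0 T) (D ×ˢ Icc 0 T) := fun τ hτ => ⟨hx, hτ⟩
  have hRx : ContinuousOn (R x) (Icc 0 T) := hR.continuousOn.comp hslice hmaps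
  have hux : ContinuousOn (timeDeriv T y x) (Icc 0 T) := hu.continuousOn.comp hslice hmaps
  have hclosed := fun {t : ℝ} (ht : t ∈ Icc 0 T) =>
    transport_closed hT hD hy1 hx (v := H x) (p := p x) (c := f x) hRx (heq x hx) ht
  have hHd : DifferentiableAt ℝ H x :=
    (hH.contDiffAt (hU.mem_nhds (hDU hx))).differentiableAt one_ne_zero
  have hψd : DifferentiableAt ℝ (psiW H) x := differentiableAt_id.inner ℝ hHd
  have hZd : DifferentiableAt ℝ (energyDensity T κ (timeDeriv T y)) x :=
    ((contDiffOn_energyDensity hT hD hu).contDiffAt (hD.mem_nhds hx)).differentiableAt one_ne_zero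
  have hψ := abs_le.1 (abs_psiW_le ((hxη x hx).trans hη1) (hHM x (hDU hx)))
  -- initial and final values of the time derivative
  have hinit : timeDeriv T y x 0 = R x 0 * f x := by
    have h1 : (fun z => y z 0) =ᶠ[𝓝 x] fun _ => (0 : ℝ) := by
      filter_upwards [hD.mem_nhds hx] with z hz using hy0 z hz
    have h2 := hclosed h0T
    rw [h1.fderiv_eq, hy0 x hx] at h2
    simpa using h2
  have hinit' : r₀ ^ 2 * f x ^ 2 ≤ timeDeriv T y x 0 ^ 2 := by
    rw [hinit, mul_pow, ← sq_abs (R x 0)]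
    exact mul_le_mul_of_nonneg_right (pow_le_pow_left₀ hr₀ (hR0 x hx) 2) (sq_nonneg _)
  set g := y x T ^ 2 + ‖gradient (fun z => y z T) x‖ ^ 2 with hg
  have hg0 : 0 ≤ g := by positivity
  have hfin : timeDeriv T y x T ^ 2 ≤ 3 * M ^ 2 * g + 3 * R₁ ^ 2 * f x ^ 2 := by
    have h1 := hclosed hTT
    set A := fderiv ℝ (fun z => y z T) x (H x) with hA
    have hA2 : A ^ 2 ≤ M ^ 2 * ‖gradient (fun z => y z T) x‖ ^ 2 := by
      have h2 : |A| ≤ M * ‖gradient (fun z => y z T) x‖ := by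
        rw [hA, ← inner_gradient_eq_fderiv]
        exact (abs_real_inner_le_norm _ _).trans
          (mul_le_mul_of_nonneg_right (hHM x (hDU hx)) (norm_nonneg _))
      rw [← mul_pow, ← sq_abs A]
      exact pow_le_pow_left₀ (abs_nonneg _) h2 2
    have hp2 : (p x * y x T) ^ 2 ≤ M ^ 2 * y x T ^ 2 := by
      rw [mul_pow, ← sq_abs (p x)]
      exact mul_le_mul_of_nonneg_right (pow_le_pow_left₀ (abs_nonneg _) (hp x hx) 2) (sq_nonneg _)
    have hR2 : (R x T * f x) ^ 2 ≤ R₁ ^ 2 * f x ^ 2 := by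
      rw [mul_pow, ← sq_abs (R x T)]
      exact mul_le_mul_of_nonneg_right (pow_le_pow_left₀ (abs_nonneg _) (hRT x hx) 2) (sq_nonneg _)
    have h3 : timeDeriv T y x T = R x T * f x - A - p x * y x T := by linarith
    rw [h3]
    nlinarith [sq_nonneg (R x T * f x + A), sq_nonneg (R x T * f x + p x * y x T),
      sq_nonneg (A - p x * y x T)]
  -- the transport inequality for the energy density
  have hZH := energyDensity_transport hT hκ0 hD hu hx (v := H x) (p := p x) (c := f x)
    (r := fun t => timeDeriv T R x t) (B := B) (M := M)
    (fun t ht => transport_timeDeriv hT hD hy hx (heq x hx) ht (hasDerivAt_timeDeriv hR hx ht))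
    (hp x hx) (hRt x hx)
  have hmain := le_divergence_weighted (s := s) (κ := κ)
    (a := r₀ ^ 2 / 2 * f x ^ 2 - 3 * M ^ 2 * g) hHd hψd hZd (energyDensity_nonneg hT)
    (hDM x (hDU hx))
    (le_fderiv_psiW hHd hδ₀ (hxη x hx) (hHM x (hDU hx)) (hDM x (hDU hx)) (hδ x hx) hη) hs hsκ hκ1
    (by
      refine le_trans ?_ hZH
      have hE1 : Real.exp (-(κ * T)) ≤ 1 := Real.exp_le_one_iff.2 (by nlinarith)
      have h1 : Real.exp (-(κ * T)) * timeDeriv T y x T ^ 2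
          ≤ 3 * M ^ 2 * g + r₀ ^ 2 / 4 * f x ^ 2 := by
        have h2 := mul_le_mul_of_nonneg_left hfin (Real.exp_pos (-(κ * T))).le
        have h3 := mul_le_mul_of_nonneg_right hκ3 (sq_nonneg (f x))
        have h4 : Real.exp (-(κ * T)) * (3 * M ^ 2 * g) ≤ 1 * (3 * M ^ 2 * g) :=
          mul_le_mul_of_nonneg_right hE1 (by positivity)
        linarith
      have h5 : B ^ 2 * f x ^ 2 / κ ≤ r₀ ^ 2 / 4 * f x ^ 2 := by
        have := mul_le_mul_of_nonneg_right hκ2 (sq_nonneg (f x))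
        rwa [div_mul_eq_mul_div] at this
      linarith)
  refine le_trans ?_ hmain
  have hZ := exp_mul_integral_sq_le_energyDensity (u := timeDeriv T y) hT hκ0.le hux
  have hlo : Real.exp (-(s * M)) ≤ Real.exp (s * psiW H x) :=
    Real.exp_le_exp.2 (by nlinarith [hψ.1])
  have hup : Real.exp (s * psiW H x) ≤ Real.exp (s * M) :=
    Real.exp_le_exp.2 (mul_le_mul_of_nonneg_left hψ.2 hs)
  have hS : 0 ≤ Real.exp (-(κ * T)) * (∫ t in (0 : ℝ)..T, timeDeriv T y x t ^ 2) :=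
    mul_nonneg (Real.exp_pos _).le (intervalIntegral.integral_nonneg hT.le fun t _ => sq_nonneg _)
  have hpos : 0 ≤ Real.exp (-(κ * T)) * (∫ t in (0 : ℝ)..T, timeDeriv T y x t ^ 2)
      + r₀ ^ 2 / 2 * f x ^ 2 := by positivity
  have i1 := mul_le_mul_of_nonneg_right hlo hpos
  have i2 := mul_le_mul_of_nonneg_right hup (show 0 ≤ 3 * M ^ 2 * g by positivity)
  have i3 := mul_le_mul_of_nonneg_left hZ (Real.exp_pos (s * psiW H x)).le
  linarith

end

noncomputable section
open MeasureTheory Metric Set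
open scoped RealInnerProductSpace
open Filter Topology

section Integrated

variable {d : ℕ} {ρ₁ : ℝ} {ℓ ℓt : Esp d → ℝ}

lemma norm_graphMk_gradient (m : Esp d → ℝ) (x' : Esp d) :
    ‖graphMk d (-gradient m x') 1‖ = omegaW d m x' := by
  rw [omegaW, eq_comm, Real.sqrt_eq_iff_eq_sq (by positivity) (norm_nonneg _),
    ← real_inner_self_eq_norm_sq (graphMk d _ _), inner_graphMk, headProj_graphMk, lastProj_graphMk,
    inner_neg_neg, real_inner_self_eq_norm_sq]
  ring

lemma inner_graphMk_gradient_nonneg {v : Esp (d + 1)} {m : Esp d → ℝ} {x' : Esp d}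
    (h : ⟪v, nuDown d m x'⟫ ≤ 0) : 0 ≤ ⟪v, graphMk d (-gradient m x') 1⟫ := by
  rw [nuDown, inner_smul_right] at h
  have hpos : 0 < (Real.sqrt (1 + ‖gradient m x'‖ ^ 2))⁻¹ := by positivity
  have h1 := nonpos_of_mul_nonpos_right h hpos
  rw [inner_graphMk] at h1 ⊢
  rw [inner_neg_right]
  linarith

lemma continuousOn_graphMk_gradient {m : Esp d → ℝ} (hm : ContDiffOn ℝ 1 m (ball 0 ρ₁)) :
    ContinuousOn (fun x' => graphMk d (-gradient m x') 1) (ball 0 ρ₁) :=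
  continuous_graphMk.comp_continuousOn
    ((continuousOn_gradient isOpen_ball hm).neg.prodMk continuousOn_const)

lemma continuousOn_omegaW {m : Esp d → ℝ} (hm : ContDiffOn ℝ 1 m (ball 0 ρ₁)) :
    ContinuousOn (omegaW d m) (ball 0 ρ₁) :=
  (continuousOn_graphMk_gradient hm).norm.congr fun x' _ => (norm_graphMk_gradient m x').symm

lemma exists_bound_omegaW (hρ₁ : 0 < ρ₁) {m : Esp d → ℝ} (hm : ContDiffOn ℝ 1 m (closedBall 0 ρ₁)) :
    ∃ C, ∀ x' ∈ ball (0 : Esp d) ρ₁, omegaW d m x' ≤ C := by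
  obtain ⟨C, hC⟩ := exists_bound_gradient hρ₁ hm
  refine ⟨Real.sqrt (1 + C ^ 2), fun x' hx' => Real.sqrt_le_sqrt ?_⟩
  have := pow_le_pow_left₀ (norm_nonneg _) (hC x' hx') 2
  linarith

lemma integrableOn_graphDomain_of_continuousOn_closure (hℓ : ContinuousOn ℓ (closedBall 0 ρ₁))
    (hℓt : ContinuousOn ℓt (closedBall 0 ρ₁)) {g : Esp (d + 1) → ℝ}
    (hg : ContinuousOn g (closure (graphDomain d ρ₁ ℓ ℓt))) :
    IntegrableOn g (graphDomain d ρ₁ ℓ ℓt) :=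
  (hg.integrableOn_compact (isCompact_closure_graphDomain hℓ hℓt)).mono_set subset_closure

lemma integrableOn_sq_add_gradient_sq (hℓ : ContinuousOn ℓ (closedBall 0 ρ₁))
    (hℓt : ContinuousOn ℓt (closedBall 0 ρ₁)) {g : Esp (d + 1) → ℝ}
    (hg : ContDiffOn ℝ 1 g (closure (graphDomain d ρ₁ ℓ ℓt))) :
    IntegrableOn (fun x => g x ^ 2 + ‖gradient g x‖ ^ 2) (graphDomain d ρ₁ ℓ ℓt) := by
  have hD := isOpen_graphDomain hℓ hℓt
  obtain ⟨C, hC⟩ := exists_bound_fderiv (isCompact_closure_graphDomain hℓ hℓt) hD subset_closure hg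
  refine (integrableOn_graphDomain_of_continuousOn_closure hℓ hℓt (hg.continuousOn.pow 2)).add ?_
  refine integrableOn_of_bounded hD.measurableSet (volume_graphDomain_lt_top hℓ hℓt)
    ((continuousOn_gradient hD (hg.mono subset_closure)).norm.pow 2) (C := C ^ 2) fun x hx => ?_
  rw [abs_of_nonneg (sq_nonneg _), norm_gradient_eq]
  exact pow_le_pow_left₀ (norm_nonneg _) (hC x hx) 2

lemma integrableOn_upperGraph (hρ₁ : 0 < ρ₁) (hℓ : ContDiffOn ℝ 1 ℓ (closedBall 0 ρ₁))
    (hℓt : ContinuousOn ℓt (closedBall 0 ρ₁)) (hpos : ∀ x' : Esp d, ‖x'‖ < ρ₁ → 0 < ℓt x')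
    {g : Esp (d + 1) → ℝ} (hg : ContinuousOn g (closure (graphDomain d ρ₁ ℓ ℓt))) :
    IntegrableOn (fun x' => g (graphMk d x' (ℓ x')) * omegaW d ℓ x') (ball 0 ρ₁) := by
  obtain ⟨C, hC⟩ := (isCompact_closure_graphDomain hℓ.continuousOn hℓt).exists_bound_of_continuousOn
    hg
  obtain ⟨W, hW⟩ := exists_bound_omegaW hρ₁ hℓ
  have hmem : ∀ x' : Esp d, ‖x'‖ < ρ₁ → ℓ x' ∈ Icc (ℓ x' - ℓt x') (ℓ x') := fun x' hx' =>
    ⟨by linarith [hpos x' hx'], le_rfl⟩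
  refine integrableOn_of_bounded measurableSet_ball measure_ball_lt_top
    ((continuousOn_comp_graph hg hpos (hℓ.continuousOn.mono ball_subset_closedBall) hmem).mul
      (continuousOn_omegaW (hℓ.mono ball_subset_closedBall))) (C := C * W) fun x' hx' => ?_
  have hx'' : ‖x'‖ < ρ₁ := by simpa using hx'
  have h1 := hC _ (graphMk_mem_closure hx'' (hpos x' hx'') (hmem x' hx''))
  have hω : 0 ≤ omegaW d ℓ x' := Real.sqrt_nonneg _
  rw [abs_mul, abs_of_nonneg hω]
  exact mul_le_mul h1 (hW x' hx') hω ((norm_nonneg _).trans h1)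

/-- One-sided divergence theorem for a field `c H` with `c ≥ 0`, when `H` is incoming through the
lower graph. -/
lemma integral_le_upperGraph_of_le_divergence (hρ₁ : 0 < ρ₁)
    (hℓ : ContDiffOn ℝ 1 ℓ (closedBall 0 ρ₁)) (hℓt : ContDiffOn ℝ 1 ℓt (closedBall 0 ρ₁))
    (hpos : ∀ x' : Esp d, ‖x'‖ < ρ₁ → 0 < ℓt x') (hzero : ∀ x' : Esp d, ‖x'‖ = ρ₁ → ℓt x' = 0)
    {H : Esp (d + 1) → Esp (d + 1)} {c b L : Esp (d + 1) → ℝ} {M : ℝ}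
    (hHc : ContinuousOn H (closure (graphDomain d ρ₁ ℓ ℓt)))
    (hHM : ∀ x ∈ closure (graphDomain d ρ₁ ℓ ℓt), ‖H x‖ ≤ M)
    (hcc : ContinuousOn c (closure (graphDomain d ρ₁ ℓ ℓt)))
    (hbc : ContinuousOn b (closure (graphDomain d ρ₁ ℓ ℓt)))
    (hc0 : ∀ x ∈ closure (graphDomain d ρ₁ ℓ ℓt), 0 ≤ c x)
    (hcb : ∀ x ∈ closure (graphDomain d ρ₁ ℓ ℓt), c x ≤ b x)
    (hF1 : ContDiffOn ℝ 1 (fun x => c x • H x) (graphDomain d ρ₁ ℓ ℓt))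
    (hL : IntegrableOn L (graphDomain d ρ₁ ℓ ℓt))
    (hLF : ∀ x ∈ graphDomain d ρ₁ ℓ ℓt, L x ≤ divergence (fun z => c z • H z) x)
    (hν : ∀ x' : Esp d, ‖x'‖ < ρ₁ →
      ⟪H (graphMk d x' (ℓ x' - ℓt x')), nuDown d (fun z => ℓ z - ℓt z) x'⟫ ≤ 0) :
    ∫ x in graphDomain d ρ₁ ℓ ℓt, L x
      ≤ M * ∫ x' in ball (0 : Esp d) ρ₁, b (graphMk d x' (ℓ x')) * omegaW d ℓ x' := by
  have hmain := integral_le_boundary_of_le_divergence hρ₁ hℓ hℓt hpos hzero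
    (F := fun x => c x • H x) (hcc.smul hHc) hF1 hL hLF
  have hlow : 0 ≤ ∫ x' in ball (0 : Esp d) ρ₁,
      ⟪c (graphMk d x' (ℓ x' - ℓt x')) • H (graphMk d x' (ℓ x' - ℓt x')),
        graphMk d (-gradient (fun z => ℓ z - ℓt z) x') 1⟫ := by
    refine setIntegral_nonneg measurableSet_ball fun x' hx' => ?_
    have hx'' : ‖x'‖ < ρ₁ := by simpa using hx'
    rw [real_inner_smul_left]
    exact mul_nonneg (hc0 _ (graphMk_mem_closure hx'' (hpos x' hx'')
      ⟨le_rfl, by linarith [hpos x' hx'']⟩)) (inner_graphMk_gradient_nonneg (hν x' hx''))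
  have hint : IntegrableOn (fun x' => b (graphMk d x' (ℓ x')) * omegaW d ℓ x') (ball 0 ρ₁) :=
    integrableOn_upperGraph hρ₁ hℓ hℓt.continuousOn hpos hbc
  have hpt : ∀ x' ∈ ball (0 : Esp d) ρ₁,
      |⟪c (graphMk d x' (ℓ x')) • H (graphMk d x' (ℓ x')), graphMk d (-gradient ℓ x') 1⟫|
        ≤ M * (b (graphMk d x' (ℓ x')) * omegaW d ℓ x') := by
    intro x' hx'
    have hx'' : ‖x'‖ < ρ₁ := by simpa using hx'
    have hmem := graphMk_mem_closure (ℓ := ℓ) hx'' (hpos x' hx'')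
      (s := ℓ x') ⟨by linarith [hpos x' hx''], le_rfl⟩
    have h0 := hc0 _ hmem
    calc _ ≤ ‖c (graphMk d x' (ℓ x')) • H (graphMk d x' (ℓ x'))‖
          * ‖graphMk d (-gradient ℓ x') 1‖ := abs_real_inner_le_norm _ _
      _ = c (graphMk d x' (ℓ x')) * ‖H (graphMk d x' (ℓ x'))‖ * omegaW d ℓ x' := by
          rw [norm_smul, Real.norm_of_nonneg h0, norm_graphMk_gradient]
      _ ≤ b (graphMk d x' (ℓ x')) * M * omegaW d ℓ x' := by
          refine mul_le_mul_of_nonneg_right ?_ (Real.sqrt_nonneg _)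
          exact mul_le_mul (hcb _ hmem) (hHM _ hmem) (norm_nonneg _) (h0.trans (hcb _ hmem))
      _ = _ := by ring
  have hup : ∫ x' in ball (0 : Esp d) ρ₁,
      ⟪c (graphMk d x' (ℓ x')) • H (graphMk d x' (ℓ x')), graphMk d (-gradient ℓ x') 1⟫
        ≤ M * ∫ x' in ball (0 : Esp d) ρ₁, b (graphMk d x' (ℓ x')) * omegaW d ℓ x' := by
    rw [← integral_const_mul]
    refine setIntegral_mono_on ?_ (hint.const_mul M) measurableSet_ball
      fun x' hx' => (le_abs_self _).trans (hpt x' hx')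
    refine (hint.const_mul M).mono' (ContinuousOn.aestronglyMeasurable ?_ measurableSet_ball)
      ((ae_restrict_iff' measurableSet_ball).2 (Eventually.of_forall hpt))
    refine (continuousOn_comp_graph (hcc.smul hHc) hpos
      (hℓ.continuousOn.mono ball_subset_closedBall)
      fun x' hx' => ⟨by linarith [hpos x' hx'], le_rfl⟩).inner
        (continuousOn_graphMk_gradient (hℓ.mono ball_subset_closedBall))
  linarith

end Integrated

end

noncomputable section
open MeasureTheory Metric Set
open scoped RealInnerProductSpace
open Filter Topology

section Constants

variable {d : ℕ} {ρ₁ T M δ₀ : ℝ} {ℓ ℓt : Esp d → ℝ}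

lemma exists_large_parameter {T N B r₀ R₁ : ℝ} (hT : 0 < T) (hr₀ : 0 < r₀) :
    ∃ κ : ℝ, 0 < κ ∧ N ≤ κ ∧ B ^ 2 / κ ≤ r₀ ^ 2 / 4 ∧
      3 * R₁ ^ 2 * Real.exp (-(κ * T)) ≤ r₀ ^ 2 / 4 := by
  have hr : 0 < r₀ ^ 2 / 4 := by positivity
  have h1 : Tendsto (fun κ : ℝ => B ^ 2 / κ) atTop (𝓝 0) := tendsto_const_nhds.div_atTop tendsto_id
  have h2 : Tendsto (fun κ : ℝ => 3 * R₁ ^ 2 * Real.exp (-(κ * T))) atTop (𝓝 (3 * R₁ ^ 2 * 0)) :=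
    (Real.tendsto_exp_neg_atTop_nhds_zero.comp (tendsto_id.atTop_mul_const hT)).const_mul _
  rw [mul_zero] at h2
  exact ((eventually_gt_atTop 0).and ((eventually_ge_atTop N).and
    ((h1.eventually (ge_mem_nhds hr)).and (h2.eventually (ge_mem_nhds hr))))).exists

/-- Lipschitz stability in terms of the time-integrated energy. -/
lemma exists_energy_stability_constant (hT : 0 < T) (hM : 0 < M) (hδ₀ : 0 < δ₀) (hρ₁ : 0 < ρ₁)
    (hℓ : ContDiffOn ℝ 1 ℓ (closedBall 0 ρ₁)) (hℓt : ContDiffOn ℝ 1 ℓt (closedBall 0 ρ₁))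
    (hpos : ∀ x' : Esp d, ‖x'‖ < ρ₁ → 0 < ℓt x') (hzero : ∀ x' : Esp d, ‖x'‖ = ρ₁ → ℓt x' = 0)
    {R : Esp (d + 1) → ℝ → ℝ}
    (hR : ContDiffOn ℝ 1 (fun q : Esp (d + 1) × ℝ => R q.1 q.2)
      (closure (graphDomain d ρ₁ ℓ ℓt) ×ˢ Icc 0 T))
    {H : Esp (d + 1) → Esp (d + 1)}
    (hH : IsAdmissible M δ₀ (closure (graphDomain d ρ₁ ℓ ℓt)) H)
    {p : Esp (d + 1) → ℝ} (hp : ∀ x ∈ closure (graphDomain d ρ₁ ℓ ℓt), |p x| ≤ M)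
    (h0 : (0 : Esp (d + 1)) ∈ closure (graphDomain d ρ₁ ℓ ℓt))
    (hdiam1 : Metric.diam (graphDomain d ρ₁ ℓ ℓt) ≤ 1)
    (hdiam2 : Metric.diam (graphDomain d ρ₁ ℓ ℓt) ≤ δ₀ ^ 2 / (2 * M ^ 2))
    (hR0 : ∀ x ∈ closure (graphDomain d ρ₁ ℓ ℓt), R x 0 ≠ 0)
    (hν : ∀ x' : Esp d, ‖x'‖ < ρ₁ →
      ⟪H (graphMk d x' (ℓ x' - ℓt x')), nuDown d (fun z => ℓ z - ℓt z) x'⟫ ≤ 0) :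
    ∃ C > (0 : ℝ), ∀ (f : Esp (d + 1) → ℝ) (y : Esp (d + 1) → ℝ → ℝ),
      ContinuousOn f (closure (graphDomain d ρ₁ ℓ ℓt)) →
      ContDiffOn ℝ 2 (fun q : Esp (d + 1) × ℝ => y q.1 q.2)
        (closure (graphDomain d ρ₁ ℓ ℓt) ×ˢ Icc 0 T) →
      (∀ x ∈ graphDomain d ρ₁ ℓ ℓt, ∀ t ∈ Ioo 0 T,
        timeDeriv T y x t + fderiv ℝ (fun z => y z t) x (H x) + p x * y x t = R x t * f x) →
      (∀ x ∈ graphDomain d ρ₁ ℓ ℓt, y x 0 = 0) →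
      (∫ x in graphDomain d ρ₁ ℓ ℓt, f x ^ 2)
          + (∫ x in graphDomain d ρ₁ ℓ ℓt, ∫ t in (0 : ℝ)..T, timeDeriv T y x t ^ 2)
        ≤ C * ((∫ x' in ball (0 : Esp d) ρ₁,
            (∫ t in (0 : ℝ)..T, timeDeriv T y (graphMk d x' (ℓ x')) t ^ 2) * omegaW d ℓ x')
          + ∫ x in graphDomain d ρ₁ ℓ ℓt, (y x T ^ 2 + ‖gradient (fun z => y z T) x‖ ^ 2)) := by
  set D := graphDomain d ρ₁ ℓ ℓt with hDdef
  obtain ⟨U, hU, -, hKU, hHU, hHM, hDM, hδ⟩ := hH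
  have hℓc := hℓ.continuousOn
  have hℓtc := hℓt.continuousOn
  have hDo : IsOpen D := isOpen_graphDomain hℓc hℓtc
  have hK : IsCompact (closure D) := isCompact_closure_graphDomain hℓc hℓtc
  have hDK : D ⊆ closure D := subset_closure
  have hprod : D ×ˢ Icc 0 T ⊆ closure D ×ˢ Icc 0 T := prod_mono hDK subset_rfl
  have h0T : (0 : ℝ) ∈ Icc 0 T := ⟨le_rfl, hT.le⟩
  have hTT : T ∈ Icc 0 T := ⟨hT.le, le_rfl⟩
  have hat : ∀ {g : Esp (d + 1) → ℝ → ℝ} {t : ℝ}, t ∈ Icc 0 T →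
      ContinuousOn (fun q : Esp (d + 1) × ℝ => g q.1 q.2) (closure D ×ˢ Icc 0 T) →
      ContinuousOn (fun x => g x t) (closure D) := fun ht hg =>
    hg.comp (by fun_prop : ContinuousOn (fun x => (x, _)) (closure D)) fun x hx => ⟨hx, ht⟩
  have hnorm : ∀ x ∈ closure D, ‖x‖ ≤ Metric.diam D := by
    intro x hx
    rw [← Metric.diam_closure, ← dist_zero_right]
    exact Metric.dist_le_diam_of_mem hK.isBounded hx h0
  have hη : Metric.diam D * M ^ 2 ≤ δ₀ ^ 2 / 2 := by
    have := mul_le_mul_of_nonneg_right hdiam2 (sq_nonneg M)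
    refine this.trans (le_of_eq ?_)
    field_simp
  obtain ⟨x₀, hx₀, hmin⟩ := hK.exists_isMinOn ⟨0, h0⟩ (hat h0T hR.continuousOn).abs
  have hr₀ : 0 < |R x₀ 0| := abs_pos.2 (hR0 x₀ hx₀)
  obtain ⟨R₁, hR₁⟩ := hK.exists_bound_of_continuousOn (hat hTT hR.continuousOn)
  obtain ⟨B, hB⟩ := (hK.prod (isCompact_Icc (a := (0 : ℝ)) (b := T))).exists_bound_of_continuousOn
    (continuousOn_timeDeriv hT hR)
  set r₀ := |R x₀ 0| with hr₀def
  obtain ⟨κ, hκ0, hκ1, hκ2, hκ3⟩ := exists_large_parameter (T := T)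
    (N := ((d + 1 : ℕ) : ℝ) * M + 2 + 2 * M) (B := B) (R₁ := R₁) hT hr₀
  set s := 4 * κ / δ₀ ^ 2 with hsdef
  have hs : 0 ≤ s := by positivity
  have hsκ : s * δ₀ ^ 2 = 4 * κ := by rw [hsdef]; field_simp
  set a₁ := Real.exp (-(s * M)) * Real.exp (-(κ * T)) with ha₁
  set a₂ := Real.exp (-(s * M)) * (r₀ ^ 2 / 2) with ha₂
  set a₃ := 3 * M ^ 2 * Real.exp (s * M) with ha₃
  set a₄ := M * Real.exp (s * M) with ha₄
  have hm : 0 < min a₁ a₂ := lt_min (by positivity) (by positivity)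
  have hm' : 0 < max a₃ a₄ := lt_max_of_lt_left (by positivity)
  refine ⟨max a₃ a₄ / min a₁ a₂, by positivity, fun f y hf hy heq hy0 => ?_⟩
  have hy1 : ContDiffOn ℝ 1 (fun q : Esp (d + 1) × ℝ => y q.1 q.2) (closure D ×ˢ Icc 0 T) :=
    hy.of_le (by norm_num)
  have hu := continuousOn_timeDeriv hT hy1
  have hslice : ∀ x ∈ closure D, ContinuousOn (timeDeriv T y x) (Icc 0 T) := fun x hx =>
    hu.comp (by fun_prop : ContinuousOn (fun τ : ℝ => (x, τ)) (Icc 0 T)) fun τ hτ => ⟨hx, hτ⟩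
  have hSc : ContinuousOn (fun x => ∫ t in (0 : ℝ)..T, timeDeriv T y x t ^ 2) (closure D) :=
    continuousOn_integral_Icc hT.le (G := fun x t => timeDeriv T y x t ^ 2) (hu.pow 2)
  have hyT : ContDiffOn ℝ 1 (fun x => y x T) (closure D) :=
    hy1.comp (by fun_prop : ContDiffOn ℝ 1 (fun x => (x, T)) (closure D)) fun x hx => ⟨hx, hTT⟩
  have hHK : ContinuousOn H (closure D) := hHU.continuousOn.mono hKU
  have hψc : ContinuousOn (psiW H) (closure D) := continuousOn_id.inner hHK
  have hψ1 : ContDiffOn ℝ 1 (psiW H) D := contDiffOn_id.inner ℝ (hHU.mono (hDK.trans hKU))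
  have hZc : ContinuousOn (energyDensity T κ (timeDeriv T y)) (closure D) :=
    continuousOn_energyDensity hT hu
  have hZ1 : ContDiffOn ℝ 1 (energyDensity T κ (timeDeriv T y)) D :=
    contDiffOn_energyDensity hT hDo (contDiffOn_timeDeriv hT hDo (hy.mono hprod))
  have hS0 : ∀ x, 0 ≤ ∫ t in (0 : ℝ)..T, timeDeriv T y x t ^ 2 := fun x =>
    intervalIntegral.integral_nonneg hT.le fun t _ => sq_nonneg _
  have hSi := integrableOn_graphDomain_of_continuousOn_closure hℓc hℓtc hSc
  have hfi : IntegrableOn (fun x => f x ^ 2) D :=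
    integrableOn_graphDomain_of_continuousOn_closure hℓc hℓtc (hf.pow 2)
  have hgi := integrableOn_sq_add_gradient_sq hℓc hℓtc hyT
  have hSfi : Integrable (fun x => a₁ * (∫ t in (0 : ℝ)..T, timeDeriv T y x t ^ 2)
      + a₂ * f x ^ 2) (volume.restrict D) := (hSi.const_mul a₁).add (hfi.const_mul a₂)
  have hLi : IntegrableOn (fun x => a₁ * (∫ t in (0 : ℝ)..T, timeDeriv T y x t ^ 2)
      + a₂ * f x ^ 2 - a₃ * (y x T ^ 2 + ‖gradient (fun z => y z T) x‖ ^ 2)) D :=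
    hSfi.sub (hgi.const_mul a₃)
  have hmain := integral_le_upperGraph_of_le_divergence hρ₁ hℓ hℓt hpos hzero hHK
    (fun x hx => hHM x (hKU hx))
    (c := fun z => Real.exp (s * psiW H z) * energyDensity T κ (timeDeriv T y) z)
    (b := fun z => Real.exp (s * M) * ∫ t in (0 : ℝ)..T, timeDeriv T y z t ^ 2)
    ((continuousOn_const.mul hψc).rexp.mul hZc) (continuousOn_const.mul hSc)
    (fun x _ => mul_nonneg (Real.exp_pos _).le (energyDensity_nonneg hT))
    (fun x hx => mul_le_mul (Real.exp_le_exp.2 (mul_le_mul_of_nonneg_left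
      (abs_le.1 (abs_psiW_le ((hnorm x hx).trans hdiam1) (hHM x (hKU hx)))).2 hs))
      (energyDensity_le_integral_sq hT hκ0.le (hslice x hx)) (energyDensity_nonneg hT)
      (Real.exp_pos _).le)
    (((contDiffOn_const.mul hψ1).exp.mul hZ1).smul (hHU.mono (hDK.trans hKU)))
    hLi
    (fun x hx => carleman_le_divergence hDo hU (hDK.trans hKU) hT hδ₀.le hHU hHM hDM
      (fun x hx => (hδ x (hDK hx)).le) (fun x hx => hnorm x (hDK hx)) hdiam1 hη
      (fun x hx => hp x (hDK hx)) (hR.mono hprod) hr₀.le (fun x hx => hmin (hDK hx))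
      (fun x hx => hR₁ x (hDK hx))
      (fun x hx t ht => hB (x, t) ⟨hDK hx, Ioo_subset_Icc_self ht⟩) (hy.mono hprod) heq hy0 hκ0 hs
      hsκ hκ1 hκ2 hκ3 hx) hν
  rw [integral_sub hSfi (hgi.const_mul a₃),
    integral_add (hSi.const_mul a₁) (hfi.const_mul a₂), integral_const_mul, integral_const_mul,
    integral_const_mul] at hmain
  simp only [mul_assoc (Real.exp (s * M))] at hmain
  rw [integral_const_mul, ← mul_assoc, ← ha₄] at hmain
  have hf0 : 0 ≤ ∫ x in D, f x ^ 2 := integral_nonneg fun x => sq_nonneg _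
  have hSS0 : 0 ≤ ∫ x in D, ∫ t in (0 : ℝ)..T, timeDeriv T y x t ^ 2 := integral_nonneg hS0
  have hg0 : 0 ≤ ∫ x in D, (y x T ^ 2 + ‖gradient (fun z => y z T) x‖ ^ 2) :=
    integral_nonneg fun x => by positivity
  have hb0 : 0 ≤ ∫ x' in ball (0 : Esp d) ρ₁,
      (∫ t in (0 : ℝ)..T, timeDeriv T y (graphMk d x' (ℓ x')) t ^ 2) * omegaW d ℓ x' :=
    integral_nonneg fun x' => mul_nonneg (hS0 _) (Real.sqrt_nonneg _)
  rw [div_mul_eq_mul_div, le_div_iff₀ hm]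
  have i1 := mul_le_mul_of_nonneg_right (min_le_left a₁ a₂) hSS0
  have i2 := mul_le_mul_of_nonneg_right (min_le_right a₁ a₂) hf0
  have i3 := mul_le_mul_of_nonneg_right (le_max_left a₃ a₄) hg0
  have i4 := mul_le_mul_of_nonneg_right (le_max_right a₃ a₄) hb0
  linarith

end Constants

end

noncomputable section
open MeasureTheory Metric Set
open scoped RealInnerProductSpace
open Filter Topology

section Final

lemma setIntegral_swap_of_bounded {X Y : Type*} [TopologicalSpace X] [MeasurableSpace X]
    [BorelSpace X] [SecondCountableTopology X] [TopologicalSpace Y] [MeasurableSpace Y]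
    [BorelSpace Y] [SecondCountableTopology Y] {μ : Measure X} {ν : Measure Y} [SFinite μ]
    [SFinite ν] {A : Set X} {B : Set Y} (hA : MeasurableSet A) (hB : MeasurableSet B)
    (hμ : μ A < ⊤) (hν : ν B < ⊤) {h : X → Y → ℝ}
    (hh : ContinuousOn (fun q : X × Y => h q.1 q.2) (A ×ˢ B)) {C : ℝ}
    (hC : ∀ x ∈ A, ∀ y ∈ B, |h x y| ≤ C) :
    ∫ y in B, ∫ x in A, h x y ∂μ ∂ν = ∫ x in A, ∫ y in B, h x y ∂ν ∂μ := by
  refine (integral_integral_swap (f := h) ?_).symm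
  rw [Measure.prod_restrict]
  refine integrableOn_of_bounded (hA.prod hB) ?_ hh (C := C) fun q hq => hC q.1 hq.1 q.2 hq.2
  rw [Measure.prod_prod]
  exact ENNReal.mul_lt_top hμ hν

/-- A function vanishing at the initial time is controlled by its derivative. -/
lemma sq_le_mul_integral_sq {T : ℝ} {w w' : ℝ → ℝ}
    (hw : ∀ t ∈ Icc 0 T, HasDerivWithinAt w (w' t) (Icc 0 T) t) (hw' : ContinuousOn w' (Icc 0 T))
    (hw0 : w 0 = 0) {t : ℝ} (ht : t ∈ Ioo 0 T) :
    w t ^ 2 ≤ T * ∫ τ in (0 : ℝ)..T, w' τ ^ 2 := by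
  have ht0 : 0 < t := ht.1
  have hsub : Icc 0 t ⊆ Icc 0 T := Icc_subset_Icc_right ht.2.le
  have hint : ∀ {h : ℝ → ℝ} {a : ℝ}, 0 ≤ a → ContinuousOn h (Icc 0 a) →
      IntervalIntegrable h volume 0 a :=
    fun ha hh => ContinuousOn.intervalIntegrable (by rwa [uIcc_of_le ha])
  have hc := hw'.mono hsub
  have hftc : ∫ τ in (0 : ℝ)..t, w' τ = w t := by
    have h := intervalIntegral.integral_eq_sub_of_hasDerivAt_of_le ht0.le (f := w) (f' := w')
      (fun τ hτ => ((hw τ (hsub hτ)).continuousWithinAt).mono hsub)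
      (fun τ hτ => (hw τ (hsub (Ioo_subset_Icc_self hτ))).hasDerivAt
        (Icc_mem_nhds hτ.1 (hτ.2.trans ht.2))) (hint ht0.le hc)
    rw [h, hw0, sub_zero]
  set c := w t / t with hcdef
  have hnn : 0 ≤ ∫ τ in (0 : ℝ)..t, (w' τ ^ 2 - 2 * c * w' τ + c ^ 2) :=
    intervalIntegral.integral_nonneg ht0.le fun τ _ => by nlinarith [sq_nonneg (w' τ - c)]
  rw [intervalIntegral.integral_add (hint ht0.le (by fun_prop)) (hint ht0.le (by fun_prop)),
    intervalIntegral.integral_sub (hint ht0.le (by fun_prop)) (hint ht0.le (by fun_prop)),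
    intervalIntegral.integral_const_mul, hftc, intervalIntegral.integral_const, smul_eq_mul,
    sub_zero] at hnn
  have hct : c * t = w t := div_mul_cancel₀ _ ht0.ne'
  have hmono : ∫ τ in (0 : ℝ)..t, w' τ ^ 2 ≤ ∫ τ in (0 : ℝ)..T, w' τ ^ 2 :=
    intervalIntegral.integral_mono_interval le_rfl ht0.le ht.2.le
      (Eventually.of_forall fun τ => sq_nonneg _) (hint (ht0.trans ht.2).le (by fun_prop))
  have hS : 0 ≤ ∫ τ in (0 : ℝ)..t, w' τ ^ 2 :=
    intervalIntegral.integral_nonneg ht0.le fun τ _ => sq_nonneg _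
  have h1 : w t ^ 2 ≤ t * ∫ τ in (0 : ℝ)..t, w' τ ^ 2 := by
    have h2 := mul_nonneg ht0.le hnn
    have h3 : t * (c * w t) = w t ^ 2 := by rw [← hct]; ring
    have h4 : t * (t * c ^ 2) = w t ^ 2 := by rw [← hct]; ring
    nlinarith
  exact h1.trans (mul_le_mul ht.2.le hmono hS (ht0.trans ht.2).le)

lemma integral_Ioo_eq_intervalIntegral {T : ℝ} (hT : 0 ≤ T) (g : ℝ → ℝ) :
    ∫ t in Ioo 0 T, g t = ∫ t in (0 : ℝ)..T, g t := by
  rw [intervalIntegral.integral_of_le hT, integral_Ioc_eq_integral_Ioo]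

variable {d : ℕ} {ρ₁ T : ℝ} {ℓ ℓt : Esp d → ℝ} {y : Esp (d + 1) → ℝ → ℝ}

lemma integral_sq_add_deriv_sq_le (hT : 0 < T) (hℓ : ContinuousOn ℓ (closedBall 0 ρ₁))
    (hℓt : ContinuousOn ℓt (closedBall 0 ρ₁))
    (hy : ContDiffOn ℝ 1 (fun q : Esp (d + 1) × ℝ => y q.1 q.2)
      (closure (graphDomain d ρ₁ ℓ ℓt) ×ˢ Icc 0 T))
    (hy0 : ∀ x ∈ graphDomain d ρ₁ ℓ ℓt, y x 0 = 0) :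
    ∫ t in Ioo 0 T, ∫ x in graphDomain d ρ₁ ℓ ℓt, (y x t ^ 2 + deriv (y x) t ^ 2)
      ≤ (T ^ 2 + 1) * ∫ x in graphDomain d ρ₁ ℓ ℓt, ∫ t in (0 : ℝ)..T, timeDeriv T y x t ^ 2 := by
  set D := graphDomain d ρ₁ ℓ ℓt with hDdef
  have hD : IsOpen D := isOpen_graphDomain hℓ hℓt
  have hK : IsCompact (closure D) := isCompact_closure_graphDomain hℓ hℓt
  have hu := continuousOn_timeDeriv hT hy
  have hcont : ContinuousOn (fun q : Esp (d + 1) × ℝ => y q.1 q.2 ^ 2 + timeDeriv T y q.1 q.2 ^ 2)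
      (closure D ×ˢ Icc 0 T) := (hy.continuousOn.pow 2).add (hu.pow 2)
  obtain ⟨C, hC⟩ := (hK.prod (isCompact_Icc (a := (0 : ℝ)) (b := T))).exists_bound_of_continuousOn
    hcont
  have hsub : D ×ˢ Ioo 0 T ⊆ closure D ×ˢ Icc 0 T := prod_mono subset_closure Ioo_subset_Icc_self
  have hcongr : ∫ t in Ioo 0 T, ∫ x in D, (y x t ^ 2 + deriv (y x) t ^ 2)
      = ∫ t in Ioo 0 T, ∫ x in D, (y x t ^ 2 + timeDeriv T y x t ^ 2) := by
    refine setIntegral_congr_fun measurableSet_Ioo fun t ht => ?_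
    refine setIntegral_congr_fun hD.measurableSet fun x hx => ?_
    simp only [(hasDerivAt_timeDeriv hy (subset_closure hx) ht).deriv]
  rw [hcongr, setIntegral_swap_of_bounded (h := fun x t => y x t ^ 2 + timeDeriv T y x t ^ 2)
    hD.measurableSet measurableSet_Ioo (volume_graphDomain_lt_top hℓ hℓt) measure_Ioo_lt_top
    (hcont.mono hsub) (C := C) (fun x hx t ht => hC (x, t) (hsub ⟨hx, ht⟩)),
    ← integral_const_mul]
  have hSc : ContinuousOn (fun x => ∫ t in (0 : ℝ)..T, timeDeriv T y x t ^ 2) (closure D) :=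
    continuousOn_integral_Icc hT.le (G := fun x t => timeDeriv T y x t ^ 2) (hu.pow 2)
  have hSc' : ContinuousOn (fun x => ∫ t in (0 : ℝ)..T, (y x t ^ 2 + timeDeriv T y x t ^ 2))
      (closure D) :=
    continuousOn_integral_Icc hT.le (G := fun x t => y x t ^ 2 + timeDeriv T y x t ^ 2) hcont
  simp only [integral_Ioo_eq_intervalIntegral hT.le]
  refine setIntegral_mono_on (integrableOn_graphDomain_of_continuousOn_closure hℓ hℓt hSc')
    ((integrableOn_graphDomain_of_continuousOn_closure hℓ hℓt hSc).const_mul _) hD.measurableSet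
    fun x hx => ?_
  have hslice : ContinuousOn (fun τ : ℝ => (x, τ)) (Icc 0 T) := by fun_prop
  have hmaps : MapsTo (fun τ : ℝ => (x, τ)) (Icc 0 T) (closure D ×ˢ Icc 0 T) :=
    fun τ hτ => ⟨subset_closure hx, hτ⟩
  have hux : ContinuousOn (timeDeriv T y x) (Icc 0 T) := hu.comp hslice hmaps
  have hyx : ContinuousOn (y x) (Icc 0 T) := hy.continuousOn.comp hslice hmaps
  have hint : ∀ {h : ℝ → ℝ}, ContinuousOn h (Icc 0 T) → IntervalIntegrable h volume 0 T :=
    fun hh => ContinuousOn.intervalIntegrable (by rwa [uIcc_of_le hT.le])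
  rw [intervalIntegral.integral_add (hint (by fun_prop)) (hint (by fun_prop))]
  have hyb : ∫ t in (0 : ℝ)..T, y x t ^ 2
      ≤ ∫ _ in (0 : ℝ)..T, T * ∫ τ in (0 : ℝ)..T, timeDeriv T y x τ ^ 2 :=
    intervalIntegral.integral_mono_on_of_le_Ioo hT.le (hint (by fun_prop))
      intervalIntegrable_const fun t ht => sq_le_mul_integral_sq
        (fun t ht => hasDerivWithinAt_timeDeriv hy (subset_closure hx) ht) hux (hy0 x hx) ht
  rw [intervalIntegral.integral_const, smul_eq_mul, sub_zero] at hyb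
  linarith

lemma integral_upperGraph_deriv_sq (hT : 0 < T) (hρ₁ : 0 < ρ₁)
    (hℓ : ContDiffOn ℝ 1 ℓ (closedBall 0 ρ₁)) (hℓt : ContinuousOn ℓt (closedBall 0 ρ₁))
    (hpos : ∀ x' : Esp d, ‖x'‖ < ρ₁ → 0 < ℓt x')
    (hy : ContDiffOn ℝ 1 (fun q : Esp (d + 1) × ℝ => y q.1 q.2)
      (closure (graphDomain d ρ₁ ℓ ℓt) ×ˢ Icc 0 T)) :
    ∫ t in Ioo 0 T, ∫ x' in ball (0 : Esp d) ρ₁,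
        deriv (y (graphMk d x' (ℓ x'))) t ^ 2 * omegaW d ℓ x'
      = ∫ x' in ball (0 : Esp d) ρ₁,
        (∫ t in (0 : ℝ)..T, timeDeriv T y (graphMk d x' (ℓ x')) t ^ 2) * omegaW d ℓ x' := by
  set D := graphDomain d ρ₁ ℓ ℓt with hDdef
  have hK : IsCompact (closure D) := isCompact_closure_graphDomain hℓ.continuousOn hℓt
  have hu : ContinuousOn (fun q : Esp (d + 1) × ℝ => timeDeriv T y q.1 q.2 ^ 2)
      (closure D ×ˢ Icc 0 T) := (continuousOn_timeDeriv hT hy).pow 2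
  have hmem : ∀ x' ∈ ball (0 : Esp d) ρ₁, graphMk d x' (ℓ x') ∈ closure D := fun x' hx' => by
    have hx'' : ‖x'‖ < ρ₁ := by simpa using hx'
    exact graphMk_mem_closure hx'' (hpos x' hx'') ⟨by linarith [hpos x' hx''], le_rfl⟩
  obtain ⟨C, hC⟩ := (hK.prod (isCompact_Icc (a := (0 : ℝ)) (b := T))).exists_bound_of_continuousOn
    hu
  obtain ⟨W, hW⟩ := exists_bound_omegaW hρ₁ hℓ
  have hcongr : ∫ t in Ioo 0 T, ∫ x' in ball (0 : Esp d) ρ₁,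
        deriv (y (graphMk d x' (ℓ x'))) t ^ 2 * omegaW d ℓ x'
      = ∫ t in Ioo 0 T, ∫ x' in ball (0 : Esp d) ρ₁,
        timeDeriv T y (graphMk d x' (ℓ x')) t ^ 2 * omegaW d ℓ x' := by
    refine setIntegral_congr_fun measurableSet_Ioo fun t ht => ?_
    refine setIntegral_congr_fun measurableSet_ball fun x' hx' => ?_
    simp only [(hasDerivAt_timeDeriv hy (hmem x' hx') ht).deriv]
  have hG : ContinuousOn (fun x' => graphMk d x' (ℓ x')) (ball 0 ρ₁) :=
    continuous_graphMk.comp_continuousOn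
      (continuousOn_id.prodMk (hℓ.continuousOn.mono ball_subset_closedBall))
  have hcont : ContinuousOn (fun q : Esp d × ℝ =>
      timeDeriv T y (graphMk d q.1 (ℓ q.1)) q.2 ^ 2 * omegaW d ℓ q.1) (ball 0 ρ₁ ×ˢ Ioo 0 T) := by
    have hω : ContinuousOn (fun q : Esp d × ℝ => omegaW d ℓ q.1) (ball 0 ρ₁ ×ˢ Ioo 0 T) :=
      (continuousOn_omegaW (hℓ.mono ball_subset_closedBall)).comp continuousOn_fst
        fun q hq => hq.1
    have hGq : ContinuousOn (fun q : Esp d × ℝ => (graphMk d q.1 (ℓ q.1), q.2))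
        (ball 0 ρ₁ ×ˢ Ioo 0 T) :=
      (hG.comp continuousOn_fst fun q hq => hq.1).prodMk continuousOn_snd
    have hmaps : MapsTo (fun q : Esp d × ℝ => (graphMk d q.1 (ℓ q.1), q.2))
        (ball 0 ρ₁ ×ˢ Ioo 0 T) (closure D ×ˢ Icc 0 T) :=
      fun q hq => ⟨hmem q.1 hq.1, Ioo_subset_Icc_self hq.2⟩
    have huG := ContinuousOn.comp (g := fun q : Esp (d + 1) × ℝ => timeDeriv T y q.1 q.2 ^ 2)
      (f := fun q : Esp d × ℝ => (graphMk d q.1 (ℓ q.1), q.2)) hu hGq hmaps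
    simpa only [Function.comp_def, Pi.mul_def] using huG.mul hω
  rw [hcongr, setIntegral_swap_of_bounded
    (h := fun x' t => timeDeriv T y (graphMk d x' (ℓ x')) t ^ 2 * omegaW d ℓ x')
    measurableSet_ball measurableSet_Ioo measure_ball_lt_top measure_Ioo_lt_top hcont (C := C * W)
    fun x' hx' t ht => ?_]
  · simp only [integral_Ioo_eq_intervalIntegral hT.le, intervalIntegral.integral_mul_const]
  · have hω : 0 ≤ omegaW d ℓ x' := Real.sqrt_nonneg _
    have h1 := hC (graphMk d x' (ℓ x'), t) ⟨hmem x' hx', Ioo_subset_Icc_self ht⟩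
    rw [abs_mul, abs_of_nonneg hω]
    exact mul_le_mul h1 (hW x' hx') hω ((norm_nonneg _).trans h1)

lemma sqrt_le_sqrt_mul_add_sqrt {A C P Q : ℝ} (hC : 0 ≤ C) (hP : 0 ≤ P) (hQ : 0 ≤ Q)
    (h : A ≤ C * (P + Q)) : Real.sqrt A ≤ Real.sqrt C * (Real.sqrt P + Real.sqrt Q) := by
  have h1 : Real.sqrt (P + Q) ≤ Real.sqrt P + Real.sqrt Q := by
    refine Real.sqrt_le_iff.2 ⟨by positivity, ?_⟩
    nlinarith [Real.sq_sqrt hP, Real.sq_sqrt hQ, Real.sqrt_nonneg P, Real.sqrt_nonneg Q]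
  calc _ ≤ Real.sqrt (C * (P + Q)) := Real.sqrt_le_sqrt h
    _ = Real.sqrt C * Real.sqrt (P + Q) := Real.sqrt_mul hC _
    _ ≤ _ := mul_le_mul_of_nonneg_left h1 (Real.sqrt_nonneg _)

end Final

end

/-- **Proposition 3** (unconditional Lipschitz stability with final-time data). -/
theorem proposition3_lipschitz_stability_final_time
    (d : ℕ) (hd : 1 ≤ d) (T M δ₀ ρ₁ : ℝ)
    (hT : 0 < T) (hM : 0 < M) (hδ₀ : 0 < δ₀) (hρ₁ : 0 < ρ₁)
    (ℓ ℓt : Esp d → ℝ)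
    (hℓ : ContDiffOn ℝ 2 ℓ (closedBall 0 ρ₁))
    (hℓt : ContDiffOn ℝ 2 ℓt (closedBall 0 ρ₁))
    (hℓtpos : ∀ x' : Esp d, ‖x'‖ < ρ₁ → 0 < ℓt x')
    (hℓt0 : ∀ x' : Esp d, ‖x'‖ = ρ₁ → ℓt x' = 0)
    (R : Esp (d+1) → ℝ → ℝ)
    (hR : ContDiffOn ℝ 2 (fun q : Esp (d+1) × ℝ => R q.1 q.2)
      (closure (graphDomain d ρ₁ ℓ ℓt) ×ˢ Icc 0 T))
    (H : Esp (d+1) → Esp (d+1))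
    (hH : IsAdmissible M δ₀ (closure (graphDomain d ρ₁ ℓ ℓt)) H)
    (p₁ : Esp (d+1) → ℝ) (hp₁ : ContinuousOn p₁ (closure (graphDomain d ρ₁ ℓ ℓt)))
    (hp₁b : ∀ x ∈ closure (graphDomain d ρ₁ ℓ ℓt), |p₁ x| ≤ M)
    (h0D : (0 : Esp (d+1)) ∈ closure (graphDomain d ρ₁ ℓ ℓt))
    (hdiam : Metric.diam (graphDomain d ρ₁ ℓ ℓt)
      < min 1 (min (δ₀ ^ 2 / (2 * M ^ 2)) (δ₀ ^ 2 * T / (16 * M))))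
    (hR0 : ∀ x ∈ closure (graphDomain d ρ₁ ℓ ℓt), R x 0 ≠ 0)
    (hHν₂ : ∀ x' : Esp d, ‖x'‖ < ρ₁ →
      ⟪H (graphMk d x' (ℓ x' - ℓt x')), nuDown d (fun z => ℓ z - ℓt z) x'⟫ ≤ 0)
 :
    ∃ C > (0:ℝ),
      ∀ (f : Esp (d+1) → ℝ) (y : Esp (d+1) → ℝ → ℝ),
        ContinuousOn f (closure (graphDomain d ρ₁ ℓ ℓt)) →
        ContDiffOn ℝ 2 (fun q : Esp (d+1) × ℝ => y q.1 q.2)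
          (closure (graphDomain d ρ₁ ℓ ℓt) ×ˢ Icc 0 T) →
        (∀ x ∈ graphDomain d ρ₁ ℓ ℓt, ∀ t ∈ Ioo (0:ℝ) T,
          deriv (y x) t + ⟪H x, gradient (fun z => y z t) x⟫ + p₁ x * y x t
            = R x t * f x) →
        (∀ x ∈ graphDomain d ρ₁ ℓ ℓt, y x 0 = 0) →
        Real.sqrt (∫ x in graphDomain d ρ₁ ℓ ℓt, (f x) ^ 2)
          + Real.sqrt (∫ t in Ioo 0 T, ∫ x in graphDomain d ρ₁ ℓ ℓt,
              ((y x t) ^ 2 + (deriv (y x) t) ^ 2))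
        ≤ C * (Real.sqrt (∫ t in Ioo 0 T, ∫ x' in ball (0 : Esp d) ρ₁,
            (deriv (y (graphMk d x' (ℓ x'))) t) ^ 2 * omegaW d ℓ x')
          + Real.sqrt (∫ x in graphDomain d ρ₁ ℓ ℓt,
              ((y x T) ^ 2 + ‖gradient (fun z => y z T) x‖ ^ 2))) := by
  obtain ⟨C, hC, hmain⟩ := exists_energy_stability_constant hT hM hδ₀ hρ₁
    (hℓ.of_le (by norm_num)) (hℓt.of_le (by norm_num)) hℓtpos hℓt0 (hR.of_le (by norm_num)) hH
    hp₁b h0D (hdiam.trans_le (min_le_left _ _)).le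
    (hdiam.trans_le ((min_le_right _ _).trans (min_le_left _ _))).le hR0 hHν₂
  refine ⟨Real.sqrt C + Real.sqrt ((T ^ 2 + 1) * C), by positivity, fun f y hf hy hpde hy0 => ?_⟩
  have hy1 : ContDiffOn ℝ 1 (fun q : Esp (d+1) × ℝ => y q.1 q.2)
      (closure (graphDomain d ρ₁ ℓ ℓt) ×ˢ Icc 0 T) := hy.of_le (by norm_num)
  have hbound := hmain f y hf hy (fun x hx t ht => by
    rw [← (hasDerivAt_timeDeriv hy1 (subset_closure hx) ht).deriv, ← inner_gradient_eq_fderiv]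
    exact hpde x hx t ht) hy0
  have henergy := integral_sq_add_deriv_sq_le hT hℓ.continuousOn hℓt.continuousOn hy1 hy0
  rw [integral_upperGraph_deriv_sq hT hρ₁ (hℓ.of_le (by norm_num)) hℓt.continuousOn hℓtpos hy1]
  set P := ∫ x' in ball (0 : Esp d) ρ₁,
    (∫ t in (0 : ℝ)..T, timeDeriv T y (graphMk d x' (ℓ x')) t ^ 2) * omegaW d ℓ x'
  set Q := ∫ x in graphDomain d ρ₁ ℓ ℓt, ((y x T) ^ 2 + ‖gradient (fun z => y z T) x‖ ^ 2)
  set A := ∫ x in graphDomain d ρ₁ ℓ ℓt, (f x) ^ 2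
  set S := ∫ x in graphDomain d ρ₁ ℓ ℓt, ∫ t in (0 : ℝ)..T, timeDeriv T y x t ^ 2
  have hP : 0 ≤ P := integral_nonneg fun x' => mul_nonneg
    (intervalIntegral.integral_nonneg hT.le fun t _ => sq_nonneg _) (Real.sqrt_nonneg _)
  have hQ : 0 ≤ Q := integral_nonneg fun x => by positivity
  have hA : 0 ≤ A := integral_nonneg fun x => sq_nonneg _
  have hS : 0 ≤ S := integral_nonneg fun x =>
    intervalIntegral.integral_nonneg hT.le fun t _ => sq_nonneg _
  rw [add_mul]
  refine add_le_add (sqrt_le_sqrt_mul_add_sqrt hC.le hP hQ (by linarith))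
    (sqrt_le_sqrt_mul_add_sqrt (by positivity) hP hQ (henergy.trans ?_))
  rw [mul_assoc]
  exact mul_le_mul_of_nonneg_left (by linarith) (by positivity)
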